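/- arXiv:0909.0564 — 2 statements merged into one kernel-verified Lean document; each statement's English description precedes it below -/
import Mathlib

section
/- Let k be a field and w ∈ S_n. Let I_w ⊆ k[z_{ij} : 1 ≤ i,j ≤ n] be the Schubert determinantal ideal, generated by all minors of size 1+r^w_{ij} of the southwest i×j submatrix Z_{ij} of the generic matrix Z = (z_{ab}) over all 1 ≤ i,j ≤ n, and call those minors with (i,j) ∈ E(w) the essential minors. A diagonal term order is a monomial order on k[z_{ij}] such that, for every square submatrix of Z with rows i_1 < … < i_r (counted from the bottom) and columns j_1 < … < j_r, the leading term of its determinant is the diagonal (northwest-to-southeast) term z_{i_r,j_1}·z_{i_{r−1},j_2}·⋯·z_{i_1,j_r}. Then for every diagonal term order ≺′, the essential minors form a Gröbner basis of I_w: the ideal generated by their ≺′-leading terms equals the initial ideal in_{≺′} I_w. -/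
/-!
Put a dot in row `n - 1 - w t` (counted from the bottom) of every column `t`; the rank matrix of `w`
then counts the dots in southwest blocks. By the condition on the term order, the leading terms of
the minors are the products of variables along diagonal chains of boxes, so a monomial is divisible
by the leading term of one of the generators of `I_w` exactly when some southwest block contains a
chain of its support longer than the rank of the block. The other monomials are called standard, and
the theorem says that the leading monomial of an element of `I_w` is never standard, and that this
is already witnessed by a block from the essential set.

The ideal `I_w` is contained in the ideal of polynomials vanishing on an explicit parametrization of
the matrix Schubert variety (`minor_mem_vanIdeal`). Division by minors shows that modulo this
vanishing ideal every monomial is a combination of standard ones that are not larger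
(`IsDiagOrder.reduce_monomial`), so it suffices that the standard monomials are linearly independent
modulo the vanishing ideal (`IsDiagOrder.stdIndep`, `IsDiagOrder.not_std`).

Independence is proved by induction on the rank function. If the dots are in decreasing order, the
parametrized variety is a coordinate subspace. Otherwise choose a southwest-minimal dot that has
another dot to its northeast, let `x` be its variable, and write `f = x f₁ + f₀` with `x` not
occurring in `f₀`. For each dot `b` to the northeast, exchanging the two columns gives a smaller
variety on which `x` vanishes: by a degeneration of the parametrization, its vanishing ideal
contains that of `w` (`vanIdeal_le_swap`), so `f₀` vanishes on it. The combinatorial core is that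
each standard monomial without `x` is standard for at least one of the exchanged permutations
(`exists_slack`), which follows from the supermodularity of the longest chain length
(`chainLen_supermodular`). Applied to the leading monomial of `f₀` this forces `f₀ = 0`, and `f₁`
is handled by induction on the degree.

Finally, if some block violates the rank bound, then so does one from the essential set
(`exists_essential`).
-/

open Equiv MvPolynomial

noncomputable section
open scoped Classical

variable {n : ℕ}

/-- The 0-based value of a permutation of `Fin n` on a natural number,
extended by the identity outside `{0, …, n-1}`. -/
def permVal (v : Equiv.Perm (Fin n)) (j : ℕ) : ℕ :=
  if h : j < n then (v ⟨j, h⟩ : ℕ) else j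

/-- The longest element `w₀` of the symmetric group, `w₀(i) = n + 1 - i` (1-based). -/
def longest : Equiv.Perm (Fin n) :=
  ⟨Fin.rev, Fin.rev, Fin.rev_rev, Fin.rev_rev⟩

/-- The Rothe diagram of `v`, as a set of 0-based boxes `(i, j)` where `i` counts rows
from the bottom and `j` columns from the left.  In 1-based terms this is
`{(i,j) : i < n - v(j) + 1 and j < v⁻¹(n - i + 1)}`. -/
def Rothe (v : Equiv.Perm (Fin n)) : Finset (ℕ × ℕ) :=
  (Finset.range n ×ˢ Finset.range n).filter
    (fun p => p.1 + permVal v p.2 + 1 < n ∧ p.2 < permVal v.symm (n - 1 - p.1))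

/-- The rank matrix `r^w_{ij} = #{k ≤ j : w(k) ≥ n - i + 1}` (translated to 0-based `i`, `j`). -/
def rankMat (w : Equiv.Perm (Fin n)) (i j : ℕ) : ℕ :=
  ((Finset.range n).filter (fun t => t ≤ j ∧ n ≤ permVal w t + i + 1)).card

/-- Bruhat order via rank matrices. -/
def bruhatLE (u w : Equiv.Perm (Fin n)) : Prop :=
  ∀ i j : ℕ, rankMat u i j ≤ rankMat w i j

/-- The essential set of `w`. -/
def essentialSet (w : Equiv.Perm (Fin n)) : Finset (ℕ × ℕ) :=
  (Rothe w).filter (fun p => (p.1 + 1, p.2) ∉ Rothe w ∧ (p.1, p.2 + 1) ∉ Rothe w)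

/-- The number of inversions (Coxeter length) of a permutation. -/
def invCount (u : Equiv.Perm (Fin n)) : ℕ :=
  ((Finset.univ : Finset (Fin n × Fin n)).filter
    (fun p => p.1 < p.2 ∧ u p.2 < u p.1)).card

/-- The adjacent transposition `s_l` (`l` 1-based) swapping `l` and `l+1`;
the identity if `l` is out of range. -/
def adjSwap {n : ℕ} (l : ℕ) : Equiv.Perm (Fin n) :=
  if h : 1 ≤ l ∧ l < n then Equiv.swap ⟨l - 1, by omega⟩ ⟨l, h.2⟩ else 1

/-- The canonical (1-based) label of a box of `D(v)`: the `t`-th box from the left in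
(1-based) row `i` gets label `i + t - 1`. -/
def canonLabel (v : Equiv.Perm (Fin n)) (b : ℕ × ℕ) : ℕ :=
  b.1 + ((Rothe v).filter (fun b' => b'.1 = b.1 ∧ b'.2 ≤ b.2)).card

/-- The boxes of `P` listed in reading order: rows from top (largest row index) to bottom,
left to right within each row. -/
def readingList (n : ℕ) (P : Finset (ℕ × ℕ)) : List (ℕ × ℕ) :=
  ((List.range n).reverse).flatMap
    (fun i => ((List.range n).filter (fun j => decide ((i, j) ∈ P))).map (fun j => (i, j)))

/-- One step of the Demazure product: multiply by `s_ℓ` if that increases length. -/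
def demStep (v : Equiv.Perm (Fin n)) (u : Equiv.Perm (Fin n)) (b : ℕ × ℕ) :
    Equiv.Perm (Fin n) :=
  if invCount u < invCount (u * adjSwap (canonLabel v b)) then u * adjSwap (canonLabel v b)
  else u

/-- The Demazure product of a pipe dream `P ⊆ D(v)`, scanning boxes in reading order. -/
def demazure (v : Equiv.Perm (Fin n)) (P : Finset (ℕ × ℕ)) : Equiv.Perm (Fin n) :=
  (readingList n P).foldl (demStep v) 1

/-- Pipe dreams on `D(v)` whose Demazure product is `x`. -/
def Pipes (v x : Equiv.Perm (Fin n)) : Finset (Finset (ℕ × ℕ)) :=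
  (Rothe v).powerset.filter (fun P => demazure v P = x)

/-- Reduced pipe dreams on `D(v)` for `x`. -/
def RedPipes (v x : Equiv.Perm (Fin n)) : Finset (Finset (ℕ × ℕ)) :=
  (Pipes v x).filter (fun P => P.card = invCount x)

/-- Faces of the pipe complex `Δ_{v,w}`: subsets `F ⊆ D(v)` such that `D(v) \ F`
contains a reduced pipe dream for `w₀ w`. -/
def IsFace (v w : Equiv.Perm (Fin n)) (F : Finset (ℕ × ℕ)) : Prop :=
  F ⊆ Rothe v ∧ ∃ P ∈ RedPipes v (longest * w), P ⊆ Rothe v \ F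

/-- The staircase `{(i,j) : i + j ≤ n}` (1-based), translated to 0-based boxes. -/
def staircase (n : ℕ) : Finset (ℕ × ℕ) :=
  (Finset.range n ×ˢ Finset.range n).filter (fun p => p.1 + p.2 + 2 ≤ n)

/-- The label `i + j - 1` (1-based) of a staircase box, in 0-based coordinates. -/
def fkLabel (b : ℕ × ℕ) : ℕ := b.1 + b.2 + 1

/-- One step of the Demazure product for Fomin–Kirillov pipe dreams. -/
def fkStep (u : Equiv.Perm (Fin n)) (b : ℕ × ℕ) : Equiv.Perm (Fin n) :=
  if invCount u < invCount (u * adjSwap (fkLabel b)) then u * adjSwap (fkLabel b) else u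

/-- The Demazure product of an FK pipe dream on the staircase. -/
def fkDemazure (n : ℕ) (P : Finset (ℕ × ℕ)) : Equiv.Perm (Fin n) :=
  (readingList n P).foldl fkStep 1

/-- FK pipe dreams on the staircase with Demazure product `x`. -/
def FKPipes (x : Equiv.Perm (Fin n)) : Finset (Finset (ℕ × ℕ)) :=
  (staircase n).powerset.filter (fun P => fkDemazure n P = x)

/-- Reduced FK pipe dreams for `x`. -/
def RedFKPipes (x : Equiv.Perm (Fin n)) : Finset (Finset (ℕ × ℕ)) :=
  (FKPipes x).filter (fun P => P.card = invCount x)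

/-- The coordinate ring `R_v = k[z_{ij} : (i,j) ∈ D(v)]`. -/
abbrev KLRing (k : Type) [Field k] (v : Equiv.Perm (Fin n)) : Type :=
  MvPolynomial {b : ℕ × ℕ // b ∈ Rothe v} k

/-- The specialized generic matrix `Z^{(v)}`: variables on `D(v)`, `1` in positions
`(n - v(j) + 1, j)` (1-based) and `0` elsewhere. -/
def klMatrix (k : Type) [Field k] (v : Equiv.Perm (Fin n)) :
    Matrix (Fin n) (Fin n) (KLRing k v) := fun i j =>
  if h : ((i : ℕ), (j : ℕ)) ∈ Rothe v then X ⟨((i : ℕ), (j : ℕ)), h⟩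
  else if (i : ℕ) + permVal v j + 1 = n then 1 else 0

/-- The minors of size `1 + r^w_{ij}` of the southwest submatrix `Z^{(v)}_{ij}`
(`(i,j)` a 0-based box, so rows `0..i` and columns `0..j`). -/
def minorsAt (k : Type) [Field k] (v w : Equiv.Perm (Fin n)) (i j : ℕ) :
    Set (KLRing k v) :=
  { d | ∃ ri ci : Fin (rankMat w i j + 1) → Fin n,
      StrictMono ri ∧ StrictMono ci ∧ (∀ a, (ri a : ℕ) ≤ i) ∧ (∀ a, (ci a : ℕ) ≤ j) ∧
      d = ((klMatrix k v).submatrix ri ci).det }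

/-- The Kazhdan–Lusztig ideal `I_{v,w}`. -/
def KLIdeal (k : Type) [Field k] (v w : Equiv.Perm (Fin n)) : Ideal (KLRing k v) :=
  Ideal.span { d | ∃ i j : ℕ, i < n ∧ j < n ∧ d ∈ minorsAt k v w i j }

/-- The essential minors of `I_{v,w}`: those at boxes of the essential set of `w`. -/
def essentialMinors (k : Type) [Field k] (v w : Equiv.Perm (Fin n)) : Set (KLRing k v) :=
  { d | ∃ b ∈ essentialSet w, d ∈ minorsAt k v w b.1 b.2 }

/-- Significance of a variable: `z_{ij} ≻ z_{kl}` iff `j > l` or (`j = l` and `i < k`),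
encoded so that larger significance means ≺-larger variable. -/
def sigIdx (n : ℕ) (b : ℕ × ℕ) : ℕ := b.2 * n + (n - 1 - b.1)

/-- The exponent in a monomial of the variable of significance `s`. -/
def expAt {v : Equiv.Perm (Fin n)} (m : {b : ℕ × ℕ // b ∈ Rothe v} →₀ ℕ) (s : ℕ) : ℕ :=
  ∑ b ∈ m.support, if sigIdx n (b : ℕ × ℕ) = s then m b else 0

/-- The lexicographic comparison of monomials: `m ≻ m'`. -/
def monGT {v : Equiv.Perm (Fin n)} (m m' : {b : ℕ × ℕ // b ∈ Rothe v} →₀ ℕ) : Prop :=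
  ∃ s : ℕ, expAt m' s < expAt m s ∧ ∀ t : ℕ, s < t → expAt m t = expAt m' t

/-- `L` is the ≺-leading term of `f`. -/
def IsLeadTerm (k : Type) [Field k] {v : Equiv.Perm (Fin n)} (f L : KLRing k v) : Prop :=
  ∃ m ∈ f.support, (∀ m' ∈ f.support, m' ≠ m → monGT m m') ∧
    L = MvPolynomial.monomial m (f.coeff m)

/-- The initial ideal of `I` with respect to `≺`: the ideal generated by the leading
terms of all nonzero elements of `I`. -/
def initialIdeal (k : Type) [Field k] {v : Equiv.Perm (Fin n)} (I : Ideal (KLRing k v)) :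
    Ideal (KLRing k v) :=
  Ideal.span { L | ∃ f ∈ I, f ≠ 0 ∧ IsLeadTerm k f L }


/-- `i` (1-based) is the last ascent of `v`: `v(i) < v(i+1)` and no ascent occurs later. -/
def IsLastAscent (v : Equiv.Perm (Fin n)) (i : ℕ) : Prop :=
  1 ≤ i ∧ i < n ∧ permVal v (i - 1) < permVal v i ∧
    ∀ i' : ℕ, i < i' → i' < n → ¬ permVal v (i' - 1) < permVal v i'

/-- The box `z_last = (n - v(i+1) + 1, i)` (1-based), in 0-based coordinates,
where `i` is the last ascent of `v`. -/
def zlastBox (v : Equiv.Perm (Fin n)) (i : ℕ) : ℕ × ℕ :=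
  (n - permVal v i - 1, i - 1)

/-- The relabeling map `φ`: delete the box `z_last` and move every other box of
column `i` (1-based) one step to the right. -/
def phiMap (v : Equiv.Perm (Fin n)) (i : ℕ) (P : Finset (ℕ × ℕ)) : Finset (ℕ × ℕ) :=
  P.filter (fun b => b.2 ≠ i - 1) ∪
    ((P.filter (fun b => b.2 = i - 1 ∧ b.1 ≠ n - permVal v i - 1)).image
      (fun b => (b.1, b.2 + 1)))

/-- The generic `n × n` matrix over `k[z_{ij} : 1 ≤ i,j ≤ n]`, with `(i,j)` indexed
row-from-the-bottom and column-from-the-left (0-based). -/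
def genZ (n : ℕ) (k : Type) [Field k] :
    Matrix (Fin n) (Fin n) (MvPolynomial (Fin n × Fin n) k) := fun i j => X (i, j)

/-- The minors of size `1 + r^w_{ij}` of the southwest submatrix `Z_{ij}`. -/
def schubMinorsAt (n : ℕ) (k : Type) [Field k] (w : Equiv.Perm (Fin n)) (i j : ℕ) :
    Set (MvPolynomial (Fin n × Fin n) k) :=
  { d | ∃ ri ci : Fin (rankMat w i j + 1) → Fin n,
      StrictMono ri ∧ StrictMono ci ∧ (∀ a, (ri a : ℕ) ≤ i) ∧ (∀ a, (ci a : ℕ) ≤ j) ∧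
      d = ((genZ n k).submatrix ri ci).det }

/-- The Schubert determinantal ideal `I_w`. -/
def schubIdeal (n : ℕ) (k : Type) [Field k] (w : Equiv.Perm (Fin n)) :
    Ideal (MvPolynomial (Fin n × Fin n) k) :=
  Ideal.span { d | ∃ i j : ℕ, i < n ∧ j < n ∧ d ∈ schubMinorsAt n k w i j }

/-- The essential minors of `I_w`. -/
def essSchubMinors (n : ℕ) (k : Type) [Field k] (w : Equiv.Perm (Fin n)) :
    Set (MvPolynomial (Fin n × Fin n) k) :=
  { d | ∃ b ∈ essentialSet w, d ∈ schubMinorsAt n k w b.1 b.2 }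

/-- `m` is the largest monomial in the support of `f` for the monomial order `mlt`. -/
def IsMaxMon (n : ℕ) (k : Type) [Field k]
    (mlt : (Fin n × Fin n →₀ ℕ) → (Fin n × Fin n →₀ ℕ) → Prop)
    (f : MvPolynomial (Fin n × Fin n) k) (m : Fin n × Fin n →₀ ℕ) : Prop :=
  m ∈ f.support ∧ ∀ m' ∈ f.support, m' ≠ m → mlt m' m

section groebner

/-! ### Chains of boxes -/

/-- `F` contains a diagonal chain of length `s` (rows, counted from the bottom, strictly increasing
and columns strictly decreasing) inside the rows `< i` and the columns `< j`.
Only the values `u 0, …, u (s - 1)` of the enumerating function matter. -/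
def HasChain (F : Set (ℕ × ℕ)) (s i j : ℕ) : Prop :=
  ∃ u : ℕ → ℕ × ℕ, (∀ t < s, u t ∈ F ∧ (u t).1 < i ∧ (u t).2 < j) ∧
    ∀ t, t + 1 < s → (u t).1 < (u (t + 1)).1 ∧ (u (t + 1)).2 < (u t).2

theorem HasChain.of_le {F : Set (ℕ × ℕ)} {s s' i i' j j' : ℕ} (h : HasChain F s i j)
    (hs : s' ≤ s) (hi : i ≤ i') (hj : j ≤ j') : HasChain F s' i' j' := by
  obtain ⟨u, h1, h2⟩ := h
  exact ⟨u, fun t ht => ⟨(h1 t (by omega)).1, by have := h1 t (by omega); omega,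
    by have := h1 t (by omega); omega⟩, fun t ht => h2 t (by omega)⟩

theorem HasChain.pred_row {F : Set (ℕ × ℕ)} {s i j : ℕ} (h : HasChain F (s + 1) (i + 1) j) :
    HasChain F s i j := by
  obtain ⟨u, h1, h2⟩ := h
  refine ⟨u, fun t ht => ⟨(h1 t (by omega)).1, ?_, (h1 t (by omega)).2.2⟩,
    fun t ht => h2 t (by omega)⟩
  have := h1 (t + 1) (by omega)
  have := h2 t (by omega)
  omega

theorem HasChain.pred_col {F : Set (ℕ × ℕ)} {s i j : ℕ} (h : HasChain F (s + 1) i (j + 1)) :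
    HasChain F s i j := by
  obtain ⟨u, h1, h2⟩ := h
  refine ⟨fun t => u (t + 1), fun t ht => ⟨(h1 _ (by omega)).1, (h1 _ (by omega)).2.1, ?_⟩,
    fun t ht => h2 _ (by omega)⟩
  have := h1 t (by omega)
  have := h2 t (by omega)
  show (u (t + 1)).2 < j
  omega

theorem HasChain.le_row {F : Set (ℕ × ℕ)} {s i j : ℕ} (h : HasChain F s i j) : s ≤ i := by
  induction i generalizing s with
  | zero =>
    rcases Nat.eq_zero_or_pos s with h0 | h0
    · omega
    · obtain ⟨u, h1, -⟩ := h
      have := h1 0 h0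
      omega
  | succ i ih =>
    cases s with
    | zero => omega
    | succ s => have := ih h.pred_row; omega

theorem HasChain.zero (F : Set (ℕ × ℕ)) (i j : ℕ) : HasChain F 0 i j :=
  ⟨fun _ => (0, 0), fun t ht => by omega, fun t ht => by omega⟩

theorem HasChain.mono {F G : Set (ℕ × ℕ)} (hFG : F ⊆ G) {s i j : ℕ} (h : HasChain F s i j) :
    HasChain G s i j := by
  obtain ⟨u, h1, h2⟩ := h
  exact ⟨u, fun t ht => ⟨hFG (h1 t ht).1, (h1 t ht).2⟩, h2⟩

/-- The exchange argument behind supermodularity of the longest chain length: two chains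
of equal length, one allowed to use the last column and one allowed to use the last row, can be
spliced either to a chain of the same length that uses neither, or to a longer chain. -/
theorem HasChain.exchange {F : Set (ℕ × ℕ)} {s i j : ℕ} (hu : HasChain F (s + 1) i (j + 1))
    (hv : HasChain F (s + 1) (i + 1) j) :
    HasChain F (s + 1) i j ∨ HasChain F (s + 2) (i + 1) (j + 1) := by
  obtain ⟨u, u1, u2⟩ := hu
  obtain ⟨v, v1, v2⟩ := hv
  by_cases hvs : (v s).1 < i
  · left
    refine ⟨v, fun t ht => ⟨(v1 t ht).1, ?_, (v1 t ht).2.2⟩, v2⟩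
    rcases Nat.lt_or_ge t s with h | h
    · have := v2 t (by omega)
      have := v1 (t + 1) (by omega)
      omega
    · have : t = s := by omega
      subst this
      exact hvs
  have hvs' : (v s).1 = i := by have := v1 s (by omega); omega
  by_cases hC : ∃ t, t ≤ s ∧ (u t).1 < (v t).1 ∧ (v t).2 < (u t).2
  · right
    obtain ⟨t, hts, h1, h2⟩ := hC
    refine ⟨fun a => if a ≤ t then u a else v (a - 1), fun a ha => ?_, fun a ha => ?_⟩
    · by_cases hat : a ≤ t
      · have := u1 a (by omega)
        simp only [hat, if_true]
        exact ⟨this.1, by omega, by omega⟩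
      · have := v1 (a - 1) (by omega)
        simp only [hat, if_false]
        exact ⟨this.1, by omega, by omega⟩
    · rcases Nat.lt_trichotomy a t with h | h | h
      · have e1 : a ≤ t := by omega
        have e2 : a + 1 ≤ t := by omega
        simp only [e1, e2, if_true]
        exact u2 a (by omega)
      · subst h
        have e2 : ¬ (a + 1 ≤ a) := by omega
        simp only [le_refl, e2, if_true, if_false, Nat.add_sub_cancel]
        exact ⟨h1, h2⟩
      · have e1 : ¬ (a ≤ t) := by omega
        have e2 : ¬ (a + 1 ≤ t) := by omega
        simp only [e1, e2, if_false]
        have := v2 (a - 1) (by omega)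
        rwa [Nat.sub_add_cancel (by omega : 1 ≤ a)] at this
  · left
    push Not at hC
    by_cases hu0 : (u 0).2 < j
    · refine ⟨u, fun t ht => ⟨(u1 t ht).1, (u1 t ht).2.1, ?_⟩, u2⟩
      rcases Nat.eq_zero_or_pos t with h | h
      · subst h; exact hu0
      · have := u2 (t - 1) (by omega)
        have := u1 (t - 1) (by omega)
        rw [Nat.sub_add_cancel (by omega : 1 ≤ t)] at *
        omega
    have hu0' : (u 0).2 = j := by have := u1 0 (by omega); omega
    -- at the start `v` lies in a weakly lower row than `u`, at the end in a higher one
    have hA0 : (v 0).1 ≤ (u 0).1 := by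
      by_contra hlt
      have := hC 0 (by omega) (by omega)
      have := v1 0 (by omega)
      omega
    obtain ⟨t, hts, hA, hB⟩ : ∃ t, t < s ∧ (v t).1 ≤ (u t).1 ∧ (u (t + 1)).1 < (v (t + 1)).1 := by
      by_contra hno
      push Not at hno
      have key : ∀ t, t ≤ s → (v t).1 ≤ (u t).1 := by
        intro t
        induction t with
        | zero => intro _; exact hA0
        | succ t ih => intro h; exact hno t (by omega) (ih (by omega))
      have := key s le_rfl
      have := u1 s (by omega)
      omega
    have hB' := hC (t + 1) (by omega) hB
    refine ⟨fun a => if a ≤ t then v a else u a, fun a ha => ?_, fun a ha => ?_⟩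
    · by_cases hat : a ≤ t
      · have := v1 a (by omega)
        have h3 := v2 a (by omega)
        have := v1 (a + 1) (by omega)
        simp only [hat, if_true]
        exact ⟨(v1 a (by omega)).1, by omega, by omega⟩
      · have h4 := u1 a (by omega)
        have h3 := u2 (a - 1) (by omega)
        have := u1 (a - 1) (by omega)
        rw [Nat.sub_add_cancel (by omega : 1 ≤ a)] at h3
        simp only [hat, if_false]
        exact ⟨h4.1, by omega, by omega⟩
    · rcases Nat.lt_trichotomy a t with h | h | h
      · have e1 : a ≤ t := by omega
        have e2 : a + 1 ≤ t := by omega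
        simp only [e1, e2, if_true]
        exact v2 a (by omega)
      · subst h
        have e2 : ¬ (a + 1 ≤ a) := by omega
        simp only [le_refl, e2, if_true, if_false]
        have := u2 a (by omega)
        have := v2 a (by omega)
        exact ⟨by omega, by omega⟩
      · have e1 : ¬ (a ≤ t) := by omega
        have e2 : ¬ (a + 1 ≤ t) := by omega
        simp only [e1, e2, if_false]
        exact u2 a (by omega)

/-- The maximal length of a diagonal chain of `F` in the rows `< i` and columns `< j`. -/
def chainLen (F : Set (ℕ × ℕ)) (i j : ℕ) : ℕ := Nat.findGreatest (fun s => HasChain F s i j) i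

theorem hasChain_iff {F : Set (ℕ × ℕ)} {s i j : ℕ} : HasChain F s i j ↔ s ≤ chainLen F i j := by
  constructor
  · intro h
    exact Nat.le_findGreatest h.le_row h
  · intro h
    have : HasChain F (chainLen F i j) i j :=
      Nat.findGreatest_spec (P := fun s => HasChain F s i j) (Nat.zero_le _) (HasChain.zero F i j)
    exact this.of_le h le_rfl le_rfl

theorem chainLen_mono {F : Set (ℕ × ℕ)} {i i' j j' : ℕ} (hi : i ≤ i') (hj : j ≤ j') :
    chainLen F i j ≤ chainLen F i' j' :=
  hasChain_iff.1 ((hasChain_iff.2 le_rfl).of_le le_rfl hi hj)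

theorem chainLen_succ_row (F : Set (ℕ × ℕ)) (i j : ℕ) :
    chainLen F (i + 1) j ≤ chainLen F i j + 1 := by
  by_contra h
  have : HasChain F (chainLen F i j + 1 + 1) (i + 1) j := hasChain_iff.2 (by omega)
  have := hasChain_iff.1 this.pred_row
  omega

theorem chainLen_succ_col (F : Set (ℕ × ℕ)) (i j : ℕ) :
    chainLen F i (j + 1) ≤ chainLen F i j + 1 := by
  by_contra h
  have : HasChain F (chainLen F i j + 1 + 1) i (j + 1) := hasChain_iff.2 (by omega)
  have := hasChain_iff.1 this.pred_col
  omega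

theorem chainLen_add_row (F : Set (ℕ × ℕ)) (i j d : ℕ) :
    chainLen F (i + d) j ≤ chainLen F i j + d := by
  induction d with
  | zero => simp
  | succ d ih => have := chainLen_succ_row F (i + d) j; rw [← add_assoc]; omega

theorem chainLen_add_col (F : Set (ℕ × ℕ)) (i j d : ℕ) :
    chainLen F i (j + d) ≤ chainLen F i j + d := by
  induction d with
  | zero => simp
  | succ d ih => have := chainLen_succ_col F i (j + d); rw [← add_assoc]; omega

/-- Supermodularity of the maximal chain length for a unit square. -/
theorem chainLen_unit (F : Set (ℕ × ℕ)) (i j : ℕ) :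
    chainLen F i (j + 1) + chainLen F (i + 1) j ≤
      chainLen F i j + chainLen F (i + 1) (j + 1) := by
  have h1 := chainLen_succ_row F i j
  have h2 := chainLen_succ_col F i j
  have h3 : chainLen F i (j + 1) ≤ chainLen F (i + 1) (j + 1) := chainLen_mono (by omega) le_rfl
  have h4 : chainLen F (i + 1) j ≤ chainLen F (i + 1) (j + 1) := chainLen_mono le_rfl (by omega)
  by_cases hc : chainLen F i (j + 1) = chainLen F i j + 1 ∧
      chainLen F (i + 1) j = chainLen F i j + 1
  · rcases HasChain.exchange (hasChain_iff.2 hc.1.ge) (hasChain_iff.2 hc.2.ge) with h | h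
    · have := hasChain_iff.1 h
      omega
    · have := hasChain_iff.1 h
      omega
  · omega

/-- Supermodularity of the maximal chain length. -/
theorem chainLen_supermodular (F : Set (ℕ × ℕ)) (i j d e : ℕ) :
    chainLen F i (j + e) + chainLen F (i + d) j ≤
      chainLen F i j + chainLen F (i + d) (j + e) := by
  induction d with
  | zero => simp [add_comm]
  | succ d ih =>
    have : chainLen F (i + d) (j + e) + chainLen F (i + d + 1) j ≤
        chainLen F (i + d) j + chainLen F (i + d + 1) (j + e) := by
      clear ih
      induction e with
      | zero => simp
      | succ e ih => have := chainLen_unit F (i + d) (j + e); simp only [← add_assoc] at *; omega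
    simp only [← add_assoc] at *
    omega

/-! ### Rank functions of permutations -/

/-- The rank function of a permutation: the number of dots `(π t, t)` of its permutation matrix in
the rows `< i` and columns `< j`. -/
def dotRank (π : Equiv.Perm (Fin n)) (i j : ℕ) : ℕ :=
  (Finset.univ.filter (fun t : Fin n => (t : ℕ) < j ∧ (π t : ℕ) < i)).card

/-- The dot in column `j₀` has no other dot weakly to its southwest. -/
def MinDot (π : Equiv.Perm (Fin n)) (j₀ : Fin n) : Prop := ∀ t < j₀, π j₀ < π t

/-- If the dots to the northeast of a southwest-minimal dot avoid the block, then every other dot of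
the block lies either below that dot or to the left of it, and no dot does both. -/
theorem dotRank_split {π : Equiv.Perm (Fin n)} {j₀ : Fin n} (hmin : MinDot π j₀) {i j : ℕ}
    (hi : (π j₀ : ℕ) < i) (hj : (j₀ : ℕ) < j)
    (hno : ∀ t : Fin n, j₀ < t → (t : ℕ) < j → π j₀ < π t → (π t : ℕ) < i → False) :
    dotRank π i j = 1 + dotRank π (π j₀) j + dotRank π i j₀ := by
  unfold dotRank
  rw [← Finset.card_singleton j₀, ← Finset.card_union_of_disjoint,
    ← Finset.card_union_of_disjoint]
  · congr 1
    ext t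
    simp only [Finset.mem_filter, Finset.mem_univ, true_and, Finset.mem_union,
      Finset.mem_singleton]
    constructor
    · rintro ⟨h1, h2⟩
      rcases lt_trichotomy t j₀ with h | h | h
      · exact Or.inr ⟨h, h2⟩
      · exact Or.inl (Or.inl h)
      · rcases lt_trichotomy (π t) (π j₀) with h' | h' | h'
        · exact Or.inl (Or.inr ⟨h1, h'⟩)
        · exact absurd (π.injective h') h.ne'
        · exact (hno t h h1 h' h2).elim
    · rintro ((h | h) | h)
      · subst h; exact ⟨hj, hi⟩
      · exact ⟨h.1, by omega⟩
      · exact ⟨by omega, h.2⟩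
  · rw [Finset.disjoint_left]
    intro t ht ht'
    simp only [Finset.mem_filter, Finset.mem_univ, true_and, Finset.mem_union,
      Finset.mem_singleton] at ht ht'
    rcases ht with ht | ht
    · subst ht; omega
    · have := hmin t ht'.1
      have : (π j₀ : ℕ) < π t := this
      omega
  · rw [Finset.disjoint_left]
    intro t ht ht'
    simp only [Finset.mem_filter, Finset.mem_univ, true_and, Finset.mem_singleton] at ht ht'
    subst ht; omega

theorem dotRank_corner {π : Equiv.Perm (Fin n)} {j₀ : Fin n} (hmin : MinDot π j₀) :
    dotRank π (π j₀ + 1) j₀ = 0 ∧ dotRank π (π j₀) (j₀ + 1) = 0 := by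
  unfold dotRank
  simp only [Finset.card_eq_zero, Finset.filter_eq_empty_iff, Finset.mem_univ, true_imp_iff]
  constructor
  · rintro t ⟨h1, h2⟩
    have : (π j₀ : ℕ) < π t := hmin t h1
    omega
  · rintro t ⟨h1, h2⟩
    rcases Nat.lt_or_ge (t : ℕ) j₀ with h | h
    · have : (π j₀ : ℕ) < π t := hmin t h
      omega
    · have : t = j₀ := Fin.ext (by omega)
      subst this; omega

/-- If no dot to the northeast lies in the rows `< i`, then the dots in the rows strictly between
`π j₀` and `i` all lie to the left of column `j₀`. -/
theorem dotRank_rows {π : Equiv.Perm (Fin n)} {j₀ : Fin n} {i : ℕ} (hi : i ≤ n)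
    (hno : ∀ t : Fin n, j₀ < t → π j₀ < π t → (π t : ℕ) < i → False) :
    i ≤ dotRank π i j₀ + (π j₀ + 1) := by
  unfold dotRank
  have : (Finset.univ.filter (fun a : Fin n => (π j₀ : ℕ) < a ∧ (a : ℕ) < i)).card ≤
      (Finset.univ.filter (fun t : Fin n => (t : ℕ) < j₀ ∧ (π t : ℕ) < i)).card := by
    refine Finset.card_le_card_of_injOn π.symm ?_ π.symm.injective.injOn
    intro a ha
    simp only [Finset.coe_filter, Finset.mem_univ, true_and, Set.mem_ofPred_eq] at ha ⊢
    refine ⟨?_, by simpa using ha.2⟩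
    by_contra hlt
    rcases (Nat.lt_or_eq_of_le (not_lt.1 hlt)) with h | h
    · exact hno (π.symm a) h (by simpa using ha.1) (by simpa using ha.2)
    · have : π.symm a = j₀ := Fin.ext h.symm
      have : a = π j₀ := by rw [← this]; simp
      subst this
      omega
  have h2 : (Finset.univ.filter (fun a : Fin n => (π j₀ : ℕ) < a ∧ (a : ℕ) < i)).card
      = (Finset.Ioo (π j₀ : ℕ) i).card := by
    rw [← Finset.card_map Fin.valEmbedding]
    congr 1
    ext a
    simp only [Finset.mem_map, Finset.mem_filter, Finset.mem_univ, true_and, Fin.valEmbedding_apply,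
      Finset.mem_Ioo]
    constructor
    · rintro ⟨b, hb, rfl⟩; exact hb
    · intro h; exact ⟨⟨a, by omega⟩, h, rfl⟩
  rw [Nat.card_Ioo] at h2
  omega

/-- If no dot to the northeast lies in the columns `< j`, then the dots in the columns strictly
between `j₀` and `j` all lie below row `π j₀`. -/
theorem dotRank_cols {π : Equiv.Perm (Fin n)} {j₀ : Fin n} {j : ℕ} (hj : j ≤ n)
    (hno : ∀ t : Fin n, j₀ < t → π j₀ < π t → (t : ℕ) < j → False) :
    j ≤ dotRank π (π j₀) j + (j₀ + 1) := by
  unfold dotRank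
  have : (Finset.univ.filter (fun a : Fin n => (j₀ : ℕ) < a ∧ (a : ℕ) < j)).card ≤
      (Finset.univ.filter (fun t : Fin n => (t : ℕ) < j ∧ (π t : ℕ) < π j₀)).card := by
    refine Finset.card_le_card ?_
    intro a ha
    simp only [Finset.mem_filter, Finset.mem_univ, true_and] at ha ⊢
    refine ⟨ha.2, ?_⟩
    by_contra hlt
    rcases (Nat.lt_or_eq_of_le (not_lt.1 hlt)) with h | h
    · exact hno a ha.1 h ha.2
    · have : j₀ = a := π.injective (Fin.ext h)
      subst this
      omega
  have h2 : (Finset.univ.filter (fun a : Fin n => (j₀ : ℕ) < a ∧ (a : ℕ) < j)).card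
      = (Finset.Ioo (j₀ : ℕ) j).card := by
    rw [← Finset.card_map Fin.valEmbedding]
    congr 1
    ext a
    simp only [Finset.mem_map, Finset.mem_filter, Finset.mem_univ, true_and, Fin.valEmbedding_apply,
      Finset.mem_Ioo]
    constructor
    · rintro ⟨b, hb, rfl⟩; exact hb
    · intro h; exact ⟨⟨a, by omega⟩, h, rfl⟩
  rw [Nat.card_Ioo] at h2
  omega

/-- The combinatorial form of the co-transition step. Suppose every chain of `F` obeys the rank
bounds of `π`, the dot `(π j₀, j₀)` is southwest-minimal with another dot to its northeast, and `F`
has no box weakly southwest of it. Then some dot `(π b, b)` northeast of it bounds a rectangle on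
which all rank bounds are strict, so `F` still obeys the rank bounds after exchanging the two
columns. -/
theorem exists_slack {π : Equiv.Perm (Fin n)} {j₀ : Fin n} (hmin : MinDot π j₀)
    (hex : ∃ t, j₀ < t ∧ π j₀ < π t) (F : Set (ℕ × ℕ))
    (hF : ∀ i j, chainLen F i j ≤ dotRank π i j)
    (h0 : chainLen F (π j₀ + 1) (j₀ + 1) = 0) :
    ∃ b, j₀ < b ∧ π j₀ < π b ∧ ∀ i j : ℕ, (π j₀ : ℕ) < i → i ≤ π b → (j₀ : ℕ) < j → j ≤ b →
      chainLen F i j < dotRank π i j := by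
  by_contra hcon
  push Not at hcon
  set T : ℕ → ℕ → Prop := fun i j => (π j₀ : ℕ) < i ∧ i ≤ n ∧ (j₀ : ℕ) < j ∧ j ≤ n ∧
    chainLen F i j = dotRank π i j with hT
  have hcon' : ∀ b, j₀ < b → π j₀ < π b → ∃ i j, T i j ∧ i ≤ π b ∧ j ≤ b := by
    intro b h1 h2
    obtain ⟨i, j, a1, a2, a3, a4, a5⟩ := hcon b h1 h2
    exact ⟨i, j, ⟨a1, by have := (π b).2; omega, a3, by have := b.2; omega,
      le_antisymm (hF i j) a5⟩, a2, a4⟩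
  have hrow : ∃ i, ∃ j, T i j := by
    obtain ⟨b, h1, h2⟩ := hex
    obtain ⟨i, j, h, -⟩ := hcon' b h1 h2
    exact ⟨i, j, h⟩
  -- `i₁` is the least row of a tight position, `j₁` the least column of one in that row
  obtain ⟨i₁, hi₁, hi₁min⟩ : ∃ i, (∃ j, T i j) ∧ ∀ i', (∃ j, T i' j) → i ≤ i' :=
    ⟨Nat.find hrow, Nat.find_spec hrow, fun i' h => Nat.find_min' hrow h⟩
  obtain ⟨j₁, hj₁, hj₁min⟩ : ∃ j, T i₁ j ∧ ∀ j', T i₁ j' → j ≤ j' :=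
    ⟨Nat.find hi₁, Nat.find_spec hi₁, fun i' h => Nat.find_min' hi₁ h⟩
  have hcol : ∀ i j, T i j → j₁ ≤ j := by
    by_contra hc
    have hc' : ∃ i, ∃ j, T i j ∧ j < j₁ := by
      push Not at hc
      obtain ⟨i, j, h, h'⟩ := hc
      exact ⟨i, j, h, h'⟩
    obtain ⟨i₂, ⟨j₂, h2, h2'⟩, hi₂min⟩ : ∃ i, (∃ j, T i j ∧ j < j₁) ∧
        ∀ i', (∃ j, T i' j ∧ j < j₁) → i ≤ i' :=
      ⟨Nat.find hc', Nat.find_spec hc', fun i' h => Nat.find_min' hc' h⟩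
    have hi12 : i₁ ≤ i₂ := hi₁min i₂ ⟨j₂, h2⟩
    have hno : ∀ t : Fin n, j₀ < t → (t : ℕ) < j₁ → π j₀ < π t → (π t : ℕ) < i₂ → False := by
      intro t t1 t2 t3 t4
      obtain ⟨i, j, a1, a2, a3⟩ := hcon' t t1 t3
      have := hi₂min i ⟨j, a1, by omega⟩
      omega
    obtain ⟨p1, p2, p3, p4, p5⟩ := hj₁
    obtain ⟨q1, q2, q3, q4, q5⟩ := h2
    have r11 := dotRank_split hmin p1 p3 (fun t t1 t2 t3 t4 => hno t t1 t2 t3 (by omega))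
    have r12 := dotRank_split hmin p1 q3 (fun t t1 t2 t3 t4 => hno t t1 (by omega) t3 (by omega))
    have r21 := dotRank_split hmin q1 p3 (fun t t1 t2 t3 t4 => hno t t1 t2 t3 (by omega))
    have r22 := dotRank_split hmin q1 q3 (fun t t1 t2 t3 t4 => hno t t1 (by omega) t3 (by omega))
    have hs := chainLen_supermodular F i₁ j₂ (i₂ - i₁) (j₁ - j₂)
    rw [Nat.add_sub_cancel' hi12, Nat.add_sub_cancel' h2'.le] at hs
    have b1 := hF i₁ j₂
    have b2 := hF i₂ j₁
    have := hj₁min j₂ ⟨p1, p2, q3, q4, by omega⟩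
    omega
  have hnr : ∀ t : Fin n, j₀ < t → π j₀ < π t → (π t : ℕ) < i₁ → False := by
    intro t t1 t2 t3
    obtain ⟨i, j, a1, a2, a3⟩ := hcon' t t1 t2
    have := hi₁min i ⟨j, a1⟩
    omega
  have hnc : ∀ t : Fin n, j₀ < t → π j₀ < π t → (t : ℕ) < j₁ → False := by
    intro t t1 t2 t3
    obtain ⟨i, j, a1, a2, a3⟩ := hcon' t t1 t2
    have := hcol i j a1
    omega
  have hj₁' := hj₁
  obtain ⟨p1, p2, p3, p4, p5⟩ := hj₁'
  have e := dotRank_split hmin p1 p3 (fun t t1 t2 t3 t4 => hnr t t1 t3 t4)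
  have er := dotRank_rows p2 hnr
  have ec := dotRank_cols p4 hnc
  obtain ⟨k1, k2⟩ := dotRank_corner hmin
  -- tightness propagates to the row and the column of the minimal dot
  have t1 : T (π j₀ + 1) j₁ := by
    have s := dotRank_split hmin (Nat.lt_succ_self (π j₀ : ℕ)) p3
      (fun t t1 t2 t3 t4 => hnr t t1 t3 (by omega))
    refine ⟨by omega, by omega, p3, p4, le_antisymm (hF _ _) ?_⟩
    have := chainLen_add_row F (π j₀ + 1) j₁ (i₁ - (π j₀ + 1))
    rw [Nat.add_sub_cancel' (by omega)] at this
    simp only [Nat.succ_eq_add_one] at s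
    omega
  have t2 : T i₁ (j₀ + 1) := by
    have s := dotRank_split hmin p1 (Nat.lt_succ_self (j₀ : ℕ))
      (fun t t1 t2 t3 t4 => hnr t t1 t3 (by omega))
    refine ⟨p1, p2, by omega, by omega, le_antisymm (hF _ _) ?_⟩
    have := chainLen_add_col F i₁ (j₀ + 1) (j₁ - (j₀ + 1))
    rw [Nat.add_sub_cancel' (by omega)] at this
    simp only [Nat.succ_eq_add_one] at s
    omega
  have f1 := hi₁min _ ⟨_, t1⟩
  have f2 := hcol _ _ t2
  have g1 : i₁ = π j₀ + 1 := by omega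
  have g2 : j₁ = j₀ + 1 := by omega
  rw [g1, g2] at p5 e
  omega

/-- Exchanging two columns whose dots are in southwest-northeast position lowers the rank function
by one on a rectangle and leaves it unchanged elsewhere. -/
theorem dotRank_swap {π : Equiv.Perm (Fin n)} {j₀ b : Fin n} (hb : j₀ < b) (hπ : π j₀ < π b)
    (i j : ℕ) :
    dotRank π i j = dotRank ((Equiv.swap j₀ b).trans π) i j +
      if (π j₀ : ℕ) < i ∧ i ≤ π b ∧ (j₀ : ℕ) < j ∧ j ≤ b then 1 else 0 := by
  have key : ∀ σ : Equiv.Perm (Fin n), dotRank σ i j =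
      (if (j₀ : ℕ) < j ∧ (σ j₀ : ℕ) < i then 1 else 0) +
      ((if (b : ℕ) < j ∧ (σ b : ℕ) < i then 1 else 0) +
      ∑ t ∈ (Finset.univ.erase j₀).erase b, if (t : ℕ) < j ∧ (σ t : ℕ) < i then 1 else 0) := by
    intro σ
    unfold dotRank
    rw [Finset.card_filter, ← Finset.add_sum_erase Finset.univ _ (Finset.mem_univ j₀),
      ← Finset.add_sum_erase (Finset.univ.erase j₀) _
        (Finset.mem_erase.2 ⟨hb.ne', Finset.mem_univ b⟩)]
  rw [key π, key]
  have hs : ∑ t ∈ (Finset.univ.erase j₀).erase b, (if (t : ℕ) < j ∧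
        ((((Equiv.swap j₀ b).trans π) t : Fin n) : ℕ) < i then 1 else 0) =
      ∑ t ∈ (Finset.univ.erase j₀).erase b, if (t : ℕ) < j ∧ (π t : ℕ) < i then 1 else 0 := by
    refine Finset.sum_congr rfl fun t ht => ?_
    simp only [Finset.mem_erase, Finset.mem_univ, and_true] at ht
    simp [Equiv.swap_apply_of_ne_of_ne ht.2 ht.1]
  rw [hs]
  have hπ' : (π j₀ : ℕ) < π b := hπ
  have hb' : (j₀ : ℕ) < b := hb
  simp only [Equiv.trans_apply, Equiv.swap_apply_left, Equiv.swap_apply_right]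
  split_ifs <;> omega

/-! ### The parametrization and its vanishing ideal -/

/-- The coordinate ring of the parameter space: one variable for each entry of two `n × n`
matrices. -/
abbrev ParRing (n : ℕ) (k : Type) [Field k] : Type :=
  MvPolynomial ((Fin n × Fin n) ⊕ (Fin n × Fin n)) k

/-- The matrix `∑ₜ l(·, t) u(t, ·)`, where the `t`-th column vector is truncated to the rows
`≥ π t` and the `t`-th row vector to the columns `≥ t`. These are the products
`L P U` with `P` the permutation matrix of `π`, `L` supported on the positions with row index at
least the column index, and `U` on those with column index at least the row index. -/
def ptMat {A : Type} [CommRing A] (π : Equiv.Perm (Fin n)) (l u : Fin n → Fin n → A)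
    (p : Fin n × Fin n) : A :=
  ∑ t, if t ≤ p.2 ∧ π t ≤ p.1 then l p.1 t * u t p.2 else 0

/-- The polynomials vanishing on the generic point of the parametrization by `ptMat π`. -/
def vanIdeal (k : Type) [Field k] (π : Equiv.Perm (Fin n)) :
    Ideal (MvPolynomial (Fin n × Fin n) k) :=
  RingHom.ker (aeval (ptMat π (fun i t => (X (Sum.inl (i, t)) : ParRing n k))
    (fun t j => X (Sum.inr (t, j)))))

variable {k : Type} [Field k]

theorem aeval_ptMat {A : Type} [CommRing A] [Algebra k A] {π : Equiv.Perm (Fin n)}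
    {f : MvPolynomial (Fin n × Fin n) k} (hf : f ∈ vanIdeal k π) (l u : Fin n → Fin n → A) :
    aeval (ptMat π l u) f = 0 := by
  have h : (aeval (Sum.elim (fun p => l p.1 p.2) (fun p => u p.1 p.2)) :
      ParRing n k →ₐ[k] A).comp (aeval (ptMat π (fun i t => (X (Sum.inl (i, t)) : ParRing n k))
    (fun t j => X (Sum.inr (t, j))))) = aeval (ptMat π l u) := by
    refine MvPolynomial.algHom_ext fun p => ?_
    simp [ptMat, apply_ite]
  rw [← h, AlgHom.comp_apply, (RingHom.mem_ker).1 hf, map_zero]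

/-- The variable of a southwest-minimal dot is not a zero divisor modulo the vanishing ideal. -/
theorem mem_vanIdeal_of_mul {π : Equiv.Perm (Fin n)} {j₀ : Fin n} (hmin : MinDot π j₀)
    {f : MvPolynomial (Fin n × Fin n) k} (hf : X (π j₀, j₀) * f ∈ vanIdeal k π) :
    f ∈ vanIdeal k π := by
  have h := (RingHom.mem_ker).1 hf
  rw [map_mul, mul_eq_zero] at h
  refine (RingHom.mem_ker).2 (h.resolve_left ?_)
  rw [aeval_X]
  unfold ptMat
  rw [Finset.sum_eq_single j₀]
  · simp [X_ne_zero]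
  · intro t _ ht
    rw [if_neg]
    rintro ⟨h1, h2⟩
    exact absurd (hmin t (lt_of_le_of_ne h1 ht)) (not_lt.2 h2)
  · simp

theorem X_mem_vanIdeal_swap {π : Equiv.Perm (Fin n)} {j₀ b : Fin n} (hmin : MinDot π j₀)
    (hb : j₀ < b) (hπ : π j₀ < π b) :
    (X (π j₀, j₀) : MvPolynomial (Fin n × Fin n) k) ∈
      vanIdeal k ((Equiv.swap j₀ b).trans π) := by
  refine (RingHom.mem_ker).2 ?_
  rw [aeval_X]
  refine Finset.sum_eq_zero fun t _ => if_neg ?_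
  rintro ⟨h1, h2⟩
  simp only [Equiv.trans_apply] at h2
  rcases lt_or_eq_of_le h1 with h | h
  · rw [Equiv.swap_apply_of_ne_of_ne h.ne (h.trans hb).ne] at h2
    exact absurd (hmin t h) (not_lt.2 h2)
  · simp only at h
    rw [h, Equiv.swap_apply_left] at h2
    exact absurd hπ (not_lt.2 h2)

/-- The entry of the degenerating family at a box, split into its regular limit and a multiple of
the parameter `e`. The propositions say whether the box lies weakly to the right of the first
or second column (`P`, `P'`) and weakly above the first or second dot (`Q`, `Q'`). -/
theorem degeneration_identity {A : Type} [Field A] {e a c d w : A} (he : e ≠ 0)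
    {P P' Q Q' : Prop} [Decidable P] [Decidable P'] [Decidable Q] [Decidable Q']
    (hP : P' → P) (hQ : Q' → Q) :
    (if P ∧ Q then (a + (if Q' then c else 0) / e) * (e * d + if P' then w else 0) else 0) +
      (if P' ∧ Q' then (if Q' then c else 0) * (-(if P' then w else 0) / e) else 0) =
    (if P ∧ Q' then c * d else 0) + (if P' ∧ Q then a * w else 0) +
      e * (if P ∧ Q then a * d else 0) := by
  by_cases h1 : P <;> by_cases h2 : Q <;> by_cases h3 : P' <;> by_cases h4 : Q' <;>
    first
    | exact absurd (hP h3) h1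
    | exact absurd (hQ h4) h2
    | (simp only [h1, h2, h3, h4, and_true, and_self, and_false, if_true, if_false]
       try field_simp
       try ring)

/-- Exchanging two columns whose dots are in southwest-northeast position enlarges the vanishing
ideal. With a parameter `ε`, the point `ptMat π l u` for `l(·, j₀) = λ + μ/ε`,
`u(j₀, ·) = ευ + ω`, `l(·, b) = μ`, `u(b, ·) = -ω/ε` has no pole at `ε = 0`, and its value there is
the generic point of the new parametrization. -/
theorem vanIdeal_le_swap {π : Equiv.Perm (Fin n)} {j₀ b : Fin n} (hb : j₀ < b)
    (hπ : π j₀ < π b) : vanIdeal k π ≤ vanIdeal k ((Equiv.swap j₀ b).trans π) := by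
  intro f hf
  let S := ParRing n k
  let B := Polynomial S
  let A := FractionRing B
  let L : Fin n → Fin n → S := fun i t => X (Sum.inl (i, t))
  let U : Fin n → Fin n → S := fun t j => X (Sum.inr (t, j))
  let φ : B →+* A := algebraMap B A
  let ι : S → A := fun s => φ (Polynomial.C s)
  let e : A := φ Polynomial.X
  have he : e ≠ 0 := by
    intro h
    exact Polynomial.X_ne_zero ((IsFractionRing.injective B A) (h.trans (map_zero φ).symm))
  let mu : Fin n → A := fun i => if π b ≤ i then ι (L i j₀) else 0
  let om : Fin n → A := fun j => if b ≤ j then ι (U b j) else 0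
  let l : Fin n → Fin n → A := fun i t =>
    if t = j₀ then ι (L i b) + mu i / e else if t = b then mu i else ι (L i t)
  let u : Fin n → Fin n → A := fun t j =>
    if t = j₀ then e * ι (U j₀ j) + om j else if t = b then - om j / e else ι (U t j)
  let q : Fin n × Fin n → B := fun p =>
    Polynomial.C (ptMat ((Equiv.swap j₀ b).trans π) L U p) +
      Polynomial.X * Polynomial.C (if j₀ ≤ p.2 ∧ π j₀ ≤ p.1 then L p.1 b * U j₀ p.2 else 0)
  have hq : ∀ p, ptMat π l u p = φ (q p) := by
    rintro ⟨i, j⟩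
    have hbj : b ∈ Finset.univ.erase j₀ := Finset.mem_erase.2 ⟨hb.ne', Finset.mem_univ b⟩
    have hsum : ∑ t ∈ (Finset.univ.erase j₀).erase b,
          (if t ≤ j ∧ π t ≤ i then l i t * u t j else 0) =
        ∑ t ∈ (Finset.univ.erase j₀).erase b,
          φ (Polynomial.C (if t ≤ j ∧ ((Equiv.swap j₀ b).trans π) t ≤ i then L i t * U t j else 0)) := by
      refine Finset.sum_congr rfl fun t ht => ?_
      simp only [Finset.mem_erase, Finset.mem_univ, and_true] at ht
      simp only [Equiv.trans_apply, Equiv.swap_apply_of_ne_of_ne ht.2 ht.1]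
      split_ifs
      · simp [l, u, ht.1, ht.2, ι]
      · simp
    simp only [q, ptMat]
    rw [map_add, map_sum, map_sum, ← Finset.add_sum_erase Finset.univ _ (Finset.mem_univ j₀),
      ← Finset.add_sum_erase (Finset.univ.erase j₀) _ hbj, hsum,
      ← Finset.add_sum_erase Finset.univ _ (Finset.mem_univ j₀),
      ← Finset.add_sum_erase (Finset.univ.erase j₀) _ hbj]
    simp only [Equiv.trans_apply, Equiv.swap_apply_left, Equiv.swap_apply_right, l, u, if_true,
      hb.ne', if_false, mu, om, map_mul]
    have h := degeneration_identity (a := ι (L i b)) (c := ι (L i j₀)) (d := ι (U j₀ j))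
      (w := ι (U b j)) (P := j₀ ≤ j) (P' := b ≤ j) (Q := π j₀ ≤ i) (Q' := π b ≤ i) he
      hb.le.trans hπ.le.trans
    rw [← add_assoc, h]
    simp only [apply_ite φ, apply_ite Polynomial.C, map_mul, map_zero, ι, e]
    ring
  have h1 := aeval_ptMat hf l u
  have h2 : aeval (ptMat π l u) f = φ (aeval q f) := by
    rw [funext hq]
    exact (MvPolynomial.aeval_algebraMap_apply A q f)
  rw [h2] at h1
  have h3 : aeval q f = 0 := (IsFractionRing.injective B A) (h1.trans (map_zero φ).symm)
  refine (RingHom.mem_ker).2 ?_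
  have h4 : ((Polynomial.aeval (0 : S) : Polynomial S →ₐ[S] S).restrictScalars k).comp (aeval q) =
      aeval (ptMat ((Equiv.swap j₀ b).trans π) L U) := by
    refine MvPolynomial.algHom_ext fun p => ?_
    simp only [AlgHom.comp_apply, aeval_X, AlgHom.restrictScalars_apply, Polynomial.coe_aeval_eq_eval,
      q]
    rw [Polynomial.eval_add, Polynomial.eval_mul, Polynomial.eval_C, Polynomial.eval_X, zero_mul,
      add_zero]
  have h5 := congrArg (fun g => g f) h4
  simp only [AlgHom.comp_apply, h3, map_zero] at h5
  exact h5.symm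

/-- A product through a free module of too small rank has determinant zero. -/
theorem det_mul_eq_zero_of_card_lt {R : Type} [CommRing R] [IsDomain R] {ι κ : Type} [Fintype ι]
    [DecidableEq ι] [Fintype κ] (h : Fintype.card κ < Fintype.card ι) (A : Matrix ι κ R) (B : Matrix κ ι R) :
    (A * B).det = 0 := by
  by_contra hd
  have hinj : Function.Injective B.mulVecLin := by
    refine (injective_iff_map_eq_zero _).2 fun v hv => ?_
    by_contra hv0
    refine hd (Matrix.exists_mulVec_eq_zero_iff.1 ⟨v, hv0, ?_⟩)
    rw [← Matrix.mulVec_mulVec, ← Matrix.mulVecLin_apply B v, hv, Matrix.mulVec_zero]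
  have := card_le_of_injective R B.mulVecLin hinj
  omega

/-- A minor supported on an initial block vanishes on the parametrization as soon as its size
exceeds the number of dots in the block. -/
theorem minor_mem_vanIdeal {π : Equiv.Perm (Fin n)} {i j s : ℕ} (hs : dotRank π i j < s)
    {ri ci : Fin s → Fin n} (hr : ∀ a, (ri a : ℕ) < i) (hc : ∀ a, (ci a : ℕ) < j) :
    ((genZ n k).submatrix ri ci).det ∈ vanIdeal k π := by
  refine (RingHom.mem_ker).2 ?_
  set Φ : MvPolynomial (Fin n × Fin n) k →ₐ[k] ParRing n k :=
    aeval (ptMat π (fun i t => (X (Sum.inl (i, t)) : ParRing n k))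
      (fun t j => X (Sum.inr (t, j)))) with hΦ
  rw [AlgHom.map_det]
  set T := {t : Fin n // (t : ℕ) < j ∧ (π t : ℕ) < i} with hT
  have hcard : Fintype.card T < Fintype.card (Fin s) := by
    rw [Fintype.card_fin, Fintype.card_subtype]
    exact hs
  let P : Matrix (Fin s) T (ParRing n k) := fun a t =>
    if π t ≤ ri a then X (Sum.inl (ri a, (t : Fin n))) else 0
  let Q : Matrix T (Fin s) (ParRing n k) := fun t c =>
    if (t : Fin n) ≤ ci c then X (Sum.inr ((t : Fin n), ci c)) else 0
  rw [show Φ.mapMatrix ((genZ n k).submatrix ri ci) = P * Q from ?_]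
  · exact det_mul_eq_zero_of_card_lt hcard P Q
  · ext1 a c
    rw [Matrix.mul_apply]
    simp only [AlgHom.mapMatrix_apply, Matrix.map_apply, Matrix.submatrix_apply, genZ, hΦ,
      aeval_X, ptMat, P, Q]
    rw [← Finset.sum_subtype (Finset.univ.filter fun t : Fin n => (t : ℕ) < j ∧ (π t : ℕ) < i)
      (by simp) (fun t : Fin n => (if π t ≤ ri a then (X (Sum.inl (ri a, t)) : ParRing n k) else 0) *
        (if t ≤ ci c then X (Sum.inr (t, ci c)) else 0)), Finset.sum_filter]
    refine Finset.sum_congr rfl fun t _ => ?_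
    by_cases h1 : t ≤ ci c <;> by_cases h2 : π t ≤ ri a
    · have h3 := hr a
      have h4 := hc c
      rw [if_pos ⟨h1, h2⟩, if_pos h1, if_pos h2, if_pos ⟨by omega, by omega⟩]
    · simp [h2]
    · simp [h1]
    · simp [h1]

/-! ### Standard monomials and division -/

/-- The support of a monomial, as a set of boxes. -/
def suppSet (m : Fin n × Fin n →₀ ℕ) : Set (ℕ × ℕ) :=
  {p | ∃ q : Fin n × Fin n, m q ≠ 0 ∧ p = ((q.1 : ℕ), (q.2 : ℕ))}

/-- A monomial is standard for `π` if in every initial block the diagonal chains of its support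
are no longer than the rank of `π`. Equivalently, no leading term of a defining minor divides it. -/
def Std (π : Equiv.Perm (Fin n)) (m : Fin n × Fin n →₀ ℕ) : Prop :=
  ∀ i j, chainLen (suppSet m) i j ≤ dotRank π i j

theorem chainLen_mono_set {F G : Set (ℕ × ℕ)} (h : F ⊆ G) (i j : ℕ) :
    chainLen F i j ≤ chainLen G i j :=
  hasChain_iff.1 ((hasChain_iff.2 le_rfl).mono h)

theorem chainLen_pos_iff {F : Set (ℕ × ℕ)} {i j : ℕ} :
    1 ≤ chainLen F i j ↔ ∃ p ∈ F, p.1 < i ∧ p.2 < j := by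
  rw [← hasChain_iff]
  constructor
  · rintro ⟨u, h, -⟩
    exact ⟨u 0, h 0 one_pos⟩
  · rintro ⟨p, h⟩
    exact ⟨fun _ => p, fun _ _ => h, fun t ht => by omega⟩

theorem Std.of_le {π : Equiv.Perm (Fin n)} {m m' : Fin n × Fin n →₀ ℕ} (h : Std π m)
    (hle : m' ≤ m) : Std π m' := fun i j => by
  refine (chainLen_mono_set ?_ i j).trans (h i j)
  rintro p ⟨q, hq, rfl⟩
  exact ⟨q, fun h0 => hq (Nat.le_zero.1 (h0 ▸ hle q)), rfl⟩

/-- The hypotheses on a diagonal term order. -/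
structure IsDiagOrder (n : ℕ) (k : Type) [Field k]
    (mlt : (Fin n × Fin n →₀ ℕ) → (Fin n × Fin n →₀ ℕ) → Prop) : Prop where
  ord : IsStrictTotalOrder (Fin n × Fin n →₀ ℕ) mlt
  add : ∀ a b c : Fin n × Fin n →₀ ℕ, mlt a b → mlt (a + c) (b + c)
  zero : ∀ a : Fin n × Fin n →₀ ℕ, a ≠ 0 → mlt 0 a
  diag : ∀ (r : ℕ) (ri ci : Fin (r + 1) → Fin n), StrictMono ri → StrictMono ci →
    IsMaxMon n k mlt ((genZ n k).submatrix ri ci).det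
      (∑ a : Fin (r + 1), Finsupp.single (ri (Fin.rev a), ci a) 1)

section order

variable {mlt : (Fin n × Fin n →₀ ℕ) → (Fin n × Fin n →₀ ℕ) → Prop}

theorem IsDiagOrder.irrefl (D : IsDiagOrder n k mlt) (a : Fin n × Fin n →₀ ℕ) : ¬ mlt a a :=
  D.ord.toIsStrictOrder.toIrrefl.irrefl a

theorem IsDiagOrder.trans (D : IsDiagOrder n k mlt) {a b c : Fin n × Fin n →₀ ℕ}
    (h : mlt a b) (h' : mlt b c) : mlt a c :=
  D.ord.toIsStrictOrder.toIsTrans.trans a b c h h'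

theorem IsDiagOrder.total (D : IsDiagOrder n k mlt) {a b : Fin n × Fin n →₀ ℕ} (h : a ≠ b) :
    mlt a b ∨ mlt b a := by
  by_contra hc
  push Not at hc
  exact h (D.ord.toTrichotomous.trichotomous a b hc.1 hc.2)

theorem IsDiagOrder.of_le (D : IsDiagOrder n k mlt) {a b : Fin n × Fin n →₀ ℕ} (h : a ≤ b) :
    a = b ∨ mlt a b := by
  obtain ⟨c, rfl⟩ := exists_add_of_le h
  by_cases hc : c = 0
  · exact Or.inl (by simp [hc])
  · right
    have := D.add 0 c a (D.zero c hc)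
    rwa [zero_add, add_comm c a] at this

/-- A monomial order is well-founded, by Dickson's lemma. -/
theorem IsDiagOrder.wf (D : IsDiagOrder n k mlt) : WellFounded mlt := by
  rw [wellFounded_iff_isEmpty_descending_chain]
  refine ⟨fun ⟨f, hf⟩ => ?_⟩
  have hlt : ∀ a d, mlt (f (a + d + 1)) (f a) := by
    intro a d
    induction d with
    | zero => exact hf a
    | succ d ih => exact D.trans (hf _) ih
  obtain ⟨a, b, hab, hle⟩ := wellQuasiOrdered_le f
  have h1 := hlt a (b - a - 1)
  rw [show a + (b - a - 1) + 1 = b by omega] at h1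
  rcases D.of_le hle with h | h
  · exact D.irrefl _ (h ▸ h1)
  · exact D.irrefl _ (D.trans h h1)

theorem IsDiagOrder.exists_isMaxMon (D : IsDiagOrder n k mlt)
    {f : MvPolynomial (Fin n × Fin n) k} (hf : f ≠ 0) : ∃ m, IsMaxMon n k mlt f m := by
  have key : ∀ s : Finset (Fin n × Fin n →₀ ℕ), s.Nonempty →
      ∃ m ∈ s, ∀ m' ∈ s, m' ≠ m → mlt m' m := by
    intro s hs
    induction hs using Finset.Nonempty.cons_induction with
    | singleton a =>
      exact ⟨a, by simp, fun m' h h' => absurd (Finset.mem_singleton.1 h) h'⟩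
    | cons a s ha hs ih =>
      obtain ⟨m, hm, hmax⟩ := ih
      have hne : a ≠ m := fun h => ha (h ▸ hm)
      rcases D.total hne with h | h
      · refine ⟨m, Finset.mem_cons_of_mem hm, fun m' h1 h2 => ?_⟩
        rcases Finset.mem_cons.1 h1 with h3 | h3
        · exact h3 ▸ h
        · exact hmax m' h3 h2
      · refine ⟨a, Finset.mem_cons_self a s, fun m' h1 h2 => ?_⟩
        rcases Finset.mem_cons.1 h1 with h3 | h3
        · exact absurd h3 h2
        · by_cases h4 : m' = m
          · exact h4 ▸ h
          · exact D.trans (hmax m' h3 h4) h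
  exact key f.support (support_nonempty.2 hf)

/-- A chain in the support of a monomial gives a minor whose leading term divides the monomial. -/
theorem exists_minor_of_hasChain {m : Fin n × Fin n →₀ ℕ} {s i j : ℕ}
    (h : HasChain (suppSet m) s i j) :
    ∃ ri ci : Fin s → Fin n, StrictMono ri ∧ StrictMono ci ∧ (∀ a, (ri a : ℕ) < i) ∧
      (∀ a, (ci a : ℕ) < j) ∧ ∑ a : Fin s, Finsupp.single (ri (Fin.rev a), ci a) 1 ≤ m := by
  obtain ⟨u, h1, h2⟩ := h
  have h3 : ∀ a : Fin s, ∃ q : Fin n × Fin n, m q ≠ 0 ∧ u a = ((q.1 : ℕ), (q.2 : ℕ)) :=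
    fun a => (h1 a a.2).1
  choose q hq hu using h3
  have hrow : StrictMono fun a => (q a).1 := by
    have key : ∀ d a, a + d + 1 < s → (u a).1 < (u (a + d + 1)).1 := by
      intro d
      induction d with
      | zero => intro a ha; exact (h2 a ha).1
      | succ d ih => intro a ha; exact (ih a (by omega)).trans (h2 (a + d + 1) ha).1
    intro a b hab
    have hab' : (a : ℕ) < b := hab
    have hb := b.2
    have := key (b - a - 1) a (by omega)
    rw [show (a : ℕ) + (b - a - 1) + 1 = b by omega, hu, hu] at this
    exact this
  have hcol : StrictAnti fun a => (q a).2 := by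
    have key : ∀ d a, a + d + 1 < s → (u (a + d + 1)).2 < (u a).2 := by
      intro d
      induction d with
      | zero => intro a ha; exact (h2 a ha).2
      | succ d ih => intro a ha; exact (h2 (a + d + 1) ha).2.trans (ih a (by omega))
    intro a b hab
    have hab' : (a : ℕ) < b := hab
    have hb := b.2
    have := key (b - a - 1) a (by omega)
    rw [show (a : ℕ) + (b - a - 1) + 1 = b by omega, hu, hu] at this
    exact this
  refine ⟨fun a => (q a).1, fun a => (q (Fin.rev a)).2, hrow,
    fun a b hab => hcol (Fin.rev_lt_rev.2 hab), fun a => ?_, fun a => ?_, fun p => ?_⟩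
  · have := (h1 a a.2).2.1
    rwa [hu] at this
  · have := (h1 (Fin.rev a) (Fin.rev a).2).2.2
    rwa [hu] at this
  · rw [Finsupp.finsetSum_apply]
    by_cases hp : ∃ a, q (Fin.rev a) = p
    · obtain ⟨a, rfl⟩ := hp
      rw [Finset.sum_eq_single a]
      · simpa [Nat.one_le_iff_ne_zero] using hq (Fin.rev a)
      · intro b _ hb
        refine Finsupp.single_eq_of_ne fun h => hb ?_
        exact (Fin.rev_injective (hrow.injective (congrArg Prod.fst h))).symm
      · simp
    · push Not at hp
      rw [Finset.sum_eq_zero]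
      · exact Nat.zero_le _
      · intro a _
        exact Finsupp.single_eq_of_ne (fun h => hp a h.symm)

theorem exists_minor_of_not_std {π : Equiv.Perm (Fin n)} {m : Fin n × Fin n →₀ ℕ}
    (hm : ¬ Std π m) (D : IsDiagOrder n k mlt) :
    ∃ d ∈ vanIdeal k π, ∃ e, IsMaxMon n k mlt d e ∧ e ≤ m := by
  unfold Std at hm
  push Not at hm
  obtain ⟨i, j, hij⟩ := hm
  obtain ⟨ri, ci, h1, h2, h3, h4, h5⟩ :=
    exists_minor_of_hasChain (hasChain_iff.2 (Nat.succ_le_of_lt hij))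
  exact ⟨_, minor_mem_vanIdeal (Nat.lt_succ_self _) h3 h4, _, D.diag _ ri ci h1 h2, h5⟩

/-- Division: modulo the vanishing ideal every monomial is a combination of standard monomials
that are not larger. -/
theorem IsDiagOrder.reduce_monomial (D : IsDiagOrder n k mlt) (π : Equiv.Perm (Fin n))
    (m : Fin n × Fin n →₀ ℕ) :
    monomial m (1 : k) ∈ (vanIdeal k π).restrictScalars k ⊔
      restrictSupport k {m' | Std π m' ∧ (m' = m ∨ mlt m' m)} := by
  induction m using D.wf.induction with
  | _ m ih =>
  by_cases hm : Std π m
  · exact Submodule.mem_sup_right ((monomial_mem_restrictSupport k).2 (Or.inl ⟨hm, Or.inl rfl⟩))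
  obtain ⟨d, hd, e, hmax, hle⟩ := exists_minor_of_not_std hm D
  have hc : coeff e d ≠ 0 := mem_support_iff.1 hmax.1
  set g := monomial m (1 : k) - monomial (m - e) (coeff e d)⁻¹ * d with hg
  have hsub : ∀ x ∈ g.support, mlt x m := by
    intro x hx
    rw [mem_support_iff, hg, coeff_sub, coeff_monomial, coeff_monomial_mul'] at hx
    by_cases hxm : m = x
    · subst hxm
      rw [if_pos rfl, if_pos tsub_le_self, tsub_tsub_cancel_of_le hle, inv_mul_cancel₀ hc,
        sub_self] at hx
      exact absurd rfl hx
    · rw [if_neg hxm, zero_sub, neg_ne_zero] at hx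
      split_ifs at hx with h
      · have hx' := right_ne_zero_of_mul hx
        by_cases hxe : x - (m - e) = e
        · exfalso
          apply hxm
          rw [← tsub_add_cancel_of_le h, hxe, add_tsub_cancel_of_le hle]
        · have := D.add _ _ (m - e) (hmax.2 _ (mem_support_iff.2 hx') hxe)
          rwa [tsub_add_cancel_of_le h, add_tsub_cancel_of_le hle] at this
      · exact absurd rfl hx
  have hgm : g ∈ (vanIdeal k π).restrictScalars k ⊔
      restrictSupport k {m' | Std π m' ∧ (m' = m ∨ mlt m' m)} := by
    rw [g.as_sum]
    refine Submodule.sum_mem _ fun x hx => ?_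
    have hxm := hsub x hx
    have h1 : restrictSupport k {m' | Std π m' ∧ (m' = x ∨ mlt m' x)} ≤
        restrictSupport k {m' | Std π m' ∧ (m' = m ∨ mlt m' m)} := by
      refine restrictSupport_mono k ?_
      rintro y ⟨hy, rfl | hy'⟩
      · exact ⟨hy, Or.inr hxm⟩
      · exact ⟨hy, Or.inr (D.trans hy' hxm)⟩
    have h2 := Submodule.smul_mem _ (coeff x g) (sup_le_sup_left h1 _ (ih x hxm))
    rwa [smul_monomial, smul_eq_mul, mul_one] at h2
  have : monomial m (1 : k) = g + monomial (m - e) (coeff e d)⁻¹ * d := by rw [hg]; ring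
  rw [this]
  exact Submodule.add_mem _ hgm (Submodule.mem_sup_left (Ideal.mul_mem_left _ _ hd))

/-- The standard monomials of `π` are linearly independent modulo the vanishing ideal. -/
def StdIndep (k : Type) [Field k] (π : Equiv.Perm (Fin n)) : Prop :=
  ∀ f ∈ vanIdeal k π, (∀ m ∈ f.support, Std π m) → f = 0

/-- Given independence, the leading monomial of an element of the vanishing ideal is not standard:
dividing the lower terms yields a combination of standard monomials with the same leading term. -/
theorem IsDiagOrder.not_std (D : IsDiagOrder n k mlt) {π : Equiv.Perm (Fin n)}
    (hπ : StdIndep k π) {f : MvPolynomial (Fin n × Fin n) k} (hf : f ∈ vanIdeal k π)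
    {m : Fin n × Fin n →₀ ℕ} (hm : IsMaxMon n k mlt f m) : ¬ Std π m := by
  intro hs
  have hc : coeff m f ≠ 0 := mem_support_iff.1 hm.1
  set g := f - monomial m (coeff m f) with hg
  have hgm : g ∈ (vanIdeal k π).restrictScalars k ⊔
      restrictSupport k {m' | Std π m' ∧ mlt m' m} := by
    rw [g.as_sum]
    refine Submodule.sum_mem _ fun x hx => ?_
    have hxm : mlt x m := by
      rw [mem_support_iff, hg, coeff_sub, coeff_monomial] at hx
      by_cases hxm : m = x
      · subst hxm
        simp at hx
      · rw [if_neg hxm, sub_zero] at hx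
        exact hm.2 x (mem_support_iff.2 hx) (Ne.symm hxm)
    have h1 : restrictSupport k {m' | Std π m' ∧ (m' = x ∨ mlt m' x)} ≤
        restrictSupport k {m' | Std π m' ∧ mlt m' m} := by
      refine restrictSupport_mono k ?_
      rintro y ⟨hy, rfl | hy'⟩
      · exact ⟨hy, hxm⟩
      · exact ⟨hy, D.trans hy' hxm⟩
    have h2 := Submodule.smul_mem _ (coeff x g)
      (sup_le_sup_left h1 _ (D.reduce_monomial π x))
    rwa [smul_monomial, smul_eq_mul, mul_one] at h2
  obtain ⟨p, hp, v, hv, hpv⟩ := Submodule.mem_sup.1 hgm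
  have h0 : monomial m (coeff m f) + v = 0 := by
    refine hπ _ ?_ fun x hx => ?_
    · have : monomial m (coeff m f) + v = f - p := by
        have : f = p + v + monomial m (coeff m f) := by rw [hpv, hg]; ring
        nth_rewrite 2 [this]
        ring
      rw [this]
      exact Ideal.sub_mem _ hf hp
    · rcases Finset.mem_union.1 (support_add hx) with h | h
      · rw [Finset.mem_singleton.1 (support_monomial_subset h)]
        exact hs
      · exact ((mem_restrictSupport_iff k).1 hv h).1
  have h1 := congrArg (coeff m) h0
  have h2 : coeff m v = 0 := by
    by_contra h
    exact D.irrefl m ((mem_restrictSupport_iff k).1 hv (mem_support_iff.2 h)).2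
  rw [coeff_add, coeff_monomial, if_pos rfl, h2, add_zero, coeff_zero] at h1
  exact hc h1

end order

/-! ### Linear independence of the standard monomials -/

/-- The base of the induction: for the order-reversing permutation the parametrization is onto the
matrices supported on the boxes `(i, j)` with `π j ≤ i`, and no other variable is standard. -/
theorem stdIndep_of_antitone {π : Equiv.Perm (Fin n)} (hπ : ∀ t t', t < t' → π t' < π t) :
    StdIndep k π := by
  intro f hf hstd
  have h := aeval_ptMat hf (fun i j => (X (i, j) : MvPolynomial (Fin n × Fin n) k))
    (fun t j => if t = j then 1 else 0)
  rw [← h]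
  have hX : aeval (X : Fin n × Fin n → MvPolynomial (Fin n × Fin n) k) f = f := by simp
  conv_lhs => rw [← hX]
  refine eval₂Hom_congr' rfl (fun p hp _ => ?_) rfl
  obtain ⟨m, hm, hpm⟩ := (mem_vars_iff_mem_support p).1 hp
  have hle : π p.2 ≤ p.1 := by
    by_contra hlt
    have hlt' : (p.1 : ℕ) < π p.2 := not_le.1 hlt
    have h1 : 1 ≤ chainLen (suppSet m) (p.1 + 1) (p.2 + 1) :=
      chainLen_pos_iff.2 ⟨_, ⟨p, Finsupp.mem_support_iff.1 hpm, rfl⟩, by simp, by simp⟩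
    have h2 := h1.trans (hstd m hm _ _)
    obtain ⟨t, ht⟩ := Finset.card_pos.1 h2
    simp only [Finset.mem_filter, Finset.mem_univ, true_and] at ht
    have hne : t ≠ p.2 := by rintro rfl; omega
    have h3 : (t : ℕ) ≠ p.2 := fun h => hne (Fin.ext h)
    have h4 : (π p.2 : ℕ) < π t := hπ t p.2 (show (t : ℕ) < p.2 by omega)
    omega
  unfold ptMat
  rw [Finset.sum_eq_single p.2]
  · simp [hle]
  · intro t _ ht
    simp [ht]
  · simp

theorem exists_minDot {π : Equiv.Perm (Fin n)} (h : ∃ t t', t < t' ∧ π t < π t') :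
    ∃ j₀, MinDot π j₀ ∧ ∃ t, j₀ < t ∧ π j₀ < π t := by
  obtain ⟨j₀, ⟨t, h1, h2⟩, hmin⟩ := WellFounded.has_min (wellFounded_lt (α := Fin n))
    {j | ∃ t, j < t ∧ π j < π t} h
  refine ⟨j₀, fun s hs => ?_, t, h1, h2⟩
  by_contra hle
  rcases lt_or_eq_of_le (not_lt.1 hle) with h3 | h3
  · exact hmin s ⟨t, hs.trans h1, h3.trans h2⟩ hs
  · exact hs.ne (π.injective h3)

/-- The sum of the rank function, which decreases when a southwest-northeast pair of dots is
exchanged. -/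
def rankSum (π : Equiv.Perm (Fin n)) : ℕ :=
  ∑ p ∈ Finset.range (n + 1) ×ˢ Finset.range (n + 1), dotRank π p.1 p.2

theorem rankSum_swap {π : Equiv.Perm (Fin n)} {j₀ b : Fin n} (hb : j₀ < b) (hπ : π j₀ < π b) :
    rankSum ((Equiv.swap j₀ b).trans π) < rankSum π := by
  refine Finset.sum_lt_sum (fun p _ => ?_) ⟨((π b : ℕ), (b : ℕ)), ?_, ?_⟩
  · rw [dotRank_swap hb hπ p.1 p.2]
    exact Nat.le_add_right _ _
  · have := (π b).2
    have := b.2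
    simp only [Finset.mem_product, Finset.mem_range]
    omega
  · have h1 : (π j₀ : ℕ) < π b := hπ
    have h2 : (j₀ : ℕ) < b := hb
    rw [dotRank_swap hb hπ, if_pos ⟨h1, le_rfl, h2, le_rfl⟩]
    exact Nat.lt_succ_self _

/-- The standard monomials are linearly independent modulo the vanishing ideal, by induction on the
sum of the rank function. Let `(π j₀, j₀)` be a southwest-minimal dot with another dot to its northeast. Write
`f = x f₁ + f₀`, where `x` is the variable of this dot and does not occur in `f₀`. Then `f₀`
vanishes on the parametrization of every exchanged permutation, while its leading monomial is
standard for one of them; hence `f₀ = 0`, and `f₁`, of smaller degree, is again in the vanishing ideal. -/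
theorem IsDiagOrder.stdIndep {mlt : (Fin n × Fin n →₀ ℕ) → (Fin n × Fin n →₀ ℕ) → Prop}
    (D : IsDiagOrder n k mlt) (π : Equiv.Perm (Fin n)) : StdIndep k π := by
  induction h : rankSum π using Nat.strong_induction_on generalizing π with
  | _ N ihN =>
  subst h
  by_cases hasc : ∃ t t', t < t' ∧ π t < π t'
  swap
  · push Not at hasc
    exact stdIndep_of_antitone fun t t' h =>
      lt_of_le_of_ne (hasc t t' h) fun h' => h.ne' (π.injective h')
  obtain ⟨j₀, hmin, hex⟩ := exists_minDot hasc
  intro f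
  induction h : f.totalDegree using Nat.strong_induction_on generalizing f with
  | _ d ihd =>
  subst h
  intro hf hstd
  set x : Fin n × Fin n := (π j₀, j₀) with hx
  set f₁ := f.divMonomial (Finsupp.single x 1) with hf₁
  set f₀ := f.modMonomial (Finsupp.single x 1) with hf₀
  have hdec : X x * f₁ + f₀ = f := divMonomial_add_modMonomial_single f x
  have h0 : f₀ = 0 := by
    by_contra hne
    obtain ⟨m, hm⟩ := D.exists_isMaxMon hne
    have hmc := mem_support_iff.1 hm.1
    have hnle : ¬ Finsupp.single x 1 ≤ m := fun hle =>
      hmc (coeff_modMonomial_of_le f hle)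
    rw [hf₀, coeff_modMonomial_of_not_le f hnle] at hmc
    have hms : Std π m := hstd m (mem_support_iff.2 hmc)
    have hcorner : chainLen (suppSet m) (π j₀ + 1) (j₀ + 1) = 0 := by
      by_contra hpos
      obtain ⟨p, ⟨q, hq, rfl⟩, h1, h2⟩ := chainLen_pos_iff.1 (Nat.one_le_iff_ne_zero.2 hpos)
      simp only at h1 h2
      obtain ⟨c1, c2⟩ := dotRank_corner hmin
      by_cases h3 : (q.2 : ℕ) < j₀
      · have := (chainLen_pos_iff.2 ⟨_, ⟨q, hq, rfl⟩, h1, h3⟩ :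
          1 ≤ chainLen (suppSet m) (π j₀ + 1) j₀)
        have := hms (π j₀ + 1) j₀
        omega
      by_cases h4 : (q.1 : ℕ) < π j₀
      · have := (chainLen_pos_iff.2 ⟨_, ⟨q, hq, rfl⟩, h4, h2⟩ :
          1 ≤ chainLen (suppSet m) (π j₀) (j₀ + 1))
        have := hms (π j₀) (j₀ + 1)
        omega
      have hqx : q = x := Prod.ext (Fin.ext (by simp only [hx]; omega))
        (Fin.ext (by simp only [hx]; omega))
      refine hnle (Finsupp.single_le_iff.2 ?_)
      rw [← hqx]
      exact Nat.one_le_iff_ne_zero.2 hq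
    obtain ⟨b, hb, hπb, hslack⟩ := exists_slack hmin hex (suppSet m) hms hcorner
    have hf₀' : f₀ ∈ vanIdeal k ((Equiv.swap j₀ b).trans π) := by
      have : f₀ = f - X x * f₁ := by rw [← hdec]; ring
      rw [this]
      exact Ideal.sub_mem _ (vanIdeal_le_swap hb hπb hf)
        (Ideal.mul_mem_right _ _ (X_mem_vanIdeal_swap hmin hb hπb))
    refine D.not_std (ihN _ (rankSum_swap hb hπb) _ rfl) hf₀' hm fun i j => ?_
    have h1 := dotRank_swap hb hπb i j
    have h2 := hms i j
    split_ifs at h1 with h3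
    · have := hslack i j h3.1 h3.2.1 h3.2.2.1 h3.2.2.2
      omega
    · omega
  rw [h0, add_zero] at hdec
  by_cases hz : f₁ = 0
  · rw [← hdec, hz, mul_zero]
  have hdeg : f₁.totalDegree < f.totalDegree := by
    rw [← hdec, totalDegree_mul_of_isDomain (X_ne_zero x) hz, totalDegree_X]
    omega
  have hf₁v : f₁ ∈ vanIdeal k π := mem_vanIdeal_of_mul hmin (hdec.symm ▸ hf)
  refine absurd (ihd _ hdeg f₁ rfl hf₁v fun m hm => ?_) hz
  rw [mem_support_iff, hf₁, coeff_divMonomial] at hm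
  exact (hstd _ (mem_support_iff.2 hm)).of_le le_add_self

/-! ### Reduction to the essential set -/

/-- The permutation whose dots are those of `w` with rows counted from the bottom. -/
def flipPerm (w : Equiv.Perm (Fin n)) : Equiv.Perm (Fin n) := w.trans Fin.revPerm

theorem rankMat_eq (w : Equiv.Perm (Fin n)) (i j : ℕ) :
    rankMat w i j = dotRank (flipPerm w) (i + 1) (j + 1) := by
  unfold rankMat dotRank
  rw [← Finset.card_map Fin.valEmbedding]
  congr 1
  ext t
  rw [Finset.mem_filter, Finset.mem_range]
  simp only [Finset.mem_filter, Finset.mem_map, Finset.mem_univ, true_and,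
    Fin.valEmbedding_apply, permVal, flipPerm, Equiv.trans_apply, Fin.revPerm_apply, Fin.val_rev]
  constructor
  · rintro ⟨h1, h2, h3⟩
    rw [dif_pos h1] at h3
    exact ⟨⟨t, h1⟩, ⟨by simp only; omega, by omega⟩, rfl⟩
  · rintro ⟨s, ⟨h1, h2⟩, rfl⟩
    have := (w s).2
    refine ⟨s.2, by omega, ?_⟩
    rw [dif_pos s.2]
    simp only [Fin.eta]
    omega

theorem mem_rothe_iff (w : Equiv.Perm (Fin n)) (i j : Fin n) :
    ((i : ℕ), (j : ℕ)) ∈ Rothe w ↔ i < flipPerm w j ∧ j < (flipPerm w).symm i := by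
  have hi := i.2
  have hj := j.2
  have h1 : n - 1 - (i : ℕ) < n := by omega
  have h2 : (⟨n - 1 - (i : ℕ), h1⟩ : Fin n) = Fin.rev i := Fin.ext (by simp [Fin.val_rev]; omega)
  have h3 : (flipPerm w).symm i = w.symm (Fin.rev i) := by
    rw [Equiv.symm_apply_eq]
    simp [flipPerm]
  have h4 := (w j).2
  rw [Rothe, Finset.mem_filter, Finset.mem_product, Finset.mem_range, Finset.mem_range]
  simp only [permVal, hi, hj, h1,
    dif_pos, h2, h3, true_and, and_self, Fin.eta, Fin.lt_def]
  simp only [flipPerm, Equiv.trans_apply, Fin.revPerm_apply, Fin.val_rev]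
  omega

theorem dotRank_succ_row (π : Equiv.Perm (Fin n)) (i : Fin n) (j : ℕ) :
    dotRank π (i + 1) j = dotRank π i j + if (π.symm i : ℕ) < j then 1 else 0 := by
  unfold dotRank
  rw [Finset.card_filter, Finset.card_filter, ← Finset.add_sum_erase _ _ (Finset.mem_univ (π.symm i)),
    ← Finset.add_sum_erase Finset.univ (fun t : Fin n => if (t : ℕ) < j ∧ (π t : ℕ) < i then 1 else 0)
      (Finset.mem_univ (π.symm i))]
  have : ∑ t ∈ Finset.univ.erase (π.symm i), (if (t : ℕ) < j ∧ (π t : ℕ) < i + 1 then 1 else 0) =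
      ∑ t ∈ Finset.univ.erase (π.symm i), if (t : ℕ) < j ∧ (π t : ℕ) < i then 1 else 0 := by
    refine Finset.sum_congr rfl fun t ht => ?_
    have hne : (π t : ℕ) ≠ i := fun h => (Finset.mem_erase.1 ht).1
      ((Equiv.eq_symm_apply π).2 (Fin.ext h))
    have : (π t : ℕ) < i + 1 ↔ (π t : ℕ) < i := by omega
    simp only [this]
  rw [this]
  simp only [Equiv.apply_symm_apply, lt_irrefl, and_false, if_false, Nat.lt_succ_self, and_true]
  omega

theorem dotRank_succ_col (π : Equiv.Perm (Fin n)) (i : ℕ) (j : Fin n) :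
    dotRank π i (j + 1) = dotRank π i j + if (π j : ℕ) < i then 1 else 0 := by
  unfold dotRank
  rw [Finset.card_filter, Finset.card_filter, ← Finset.add_sum_erase _ _ (Finset.mem_univ j),
    ← Finset.add_sum_erase Finset.univ (fun t : Fin n => if (t : ℕ) < j ∧ (π t : ℕ) < i then 1 else 0)
      (Finset.mem_univ j)]
  have : ∑ t ∈ Finset.univ.erase j, (if (t : ℕ) < j + 1 ∧ (π t : ℕ) < i then 1 else 0) =
      ∑ t ∈ Finset.univ.erase j, if (t : ℕ) < j ∧ (π t : ℕ) < i then 1 else 0 := by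
    refine Finset.sum_congr rfl fun t ht => ?_
    have hne : (t : ℕ) ≠ j := fun h => (Finset.mem_erase.1 ht).1 (Fin.ext h)
    have : (t : ℕ) < j + 1 ↔ (t : ℕ) < j := by omega
    simp only [this]
  rw [this]
  simp only [lt_irrefl, false_and, if_false, Nat.lt_succ_self, true_and]
  omega

/-- If a chain in the support of `m` is longer than the rank of its block allows, then so is one in
a block of the essential set. A violated block of least size lies in the Rothe diagram, since the
longest chain grows by at most one per row or column; inside the diagram the ranks do not change
when the block grows by one row or column, so a largest violated box is essential. -/
theorem exists_essential {w : Equiv.Perm (Fin n)} {m : Fin n × Fin n →₀ ℕ}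
    (hm : ¬ Std (flipPerm w) m) : ∃ p ∈ essentialSet w,
      rankMat w p.1 p.2 < chainLen (suppSet m) (p.1 + 1) (p.2 + 1) := by
  set F := suppSet m with hF
  set π := flipPerm w with hπ
  unfold Std at hm
  push Not at hm
  have hex : ∃ s i j, i + j = s ∧ dotRank π i j < chainLen F i j := by
    obtain ⟨i, j, h⟩ := hm
    exact ⟨_, i, j, rfl, h⟩
  obtain ⟨i, j, hij, hv⟩ := Nat.find_spec hex
  have hmin : ∀ i' j', i' + j' < i + j → chainLen F i' j' ≤ dotRank π i' j' := by
    intro i' j' h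
    by_contra hc
    exact Nat.find_min hex (hij ▸ h) ⟨i', j', rfl, not_le.1 hc⟩
  have hrothe : ∃ a b : Fin n, i = a + 1 ∧ j = b + 1 ∧ a < π b ∧ b < π.symm a := by
    have hpos : 1 ≤ chainLen F i j := by omega
    obtain ⟨p, -, hp1, hp2⟩ := chainLen_pos_iff.1 hpos
    obtain ⟨i, rfl⟩ : ∃ a, i = a + 1 := ⟨i - 1, by omega⟩
    obtain ⟨j, rfl⟩ : ∃ a, j = a + 1 := ⟨j - 1, by omega⟩
    have m1 := hmin i (j + 1) (by omega)
    have m2 := hmin (i + 1) j (by omega)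
    have hmono : ∀ {i i' j j' : ℕ}, i ≤ i' → j ≤ j' → dotRank π i j ≤ dotRank π i' j' := by
      intro i i' j j' h1 h2
      refine Finset.card_le_card fun t ht => ?_
      simp only [Finset.mem_filter, Finset.mem_univ, true_and] at ht ⊢
      omega
    have hin : i < n := by
      by_contra hlt
      have h1 : chainLen F (i + 1) (j + 1) ≤ chainLen F i (j + 1) := by
        rw [← hasChain_iff]
        obtain ⟨u, u1, u2⟩ := (hasChain_iff (F := F)).2 (le_refl (chainLen F (i + 1) (j + 1)))
        refine ⟨u, fun t ht => ⟨(u1 t ht).1, ?_, (u1 t ht).2.2⟩, u2⟩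
        obtain ⟨q, -, hq⟩ := (u1 t ht).1
        have := q.1.2
        rw [hq]
        simp only
        omega
      have : dotRank π i (j + 1) ≤ dotRank π (i + 1) (j + 1) := hmono (Nat.le_succ i) le_rfl
      omega
    have hjn : j < n := by
      by_contra hlt
      have h1 : chainLen F (i + 1) (j + 1) ≤ chainLen F (i + 1) j := by
        rw [← hasChain_iff]
        obtain ⟨u, u1, u2⟩ := (hasChain_iff (F := F)).2 (le_refl (chainLen F (i + 1) (j + 1)))
        refine ⟨u, fun t ht => ⟨(u1 t ht).1, (u1 t ht).2.1, ?_⟩, u2⟩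
        obtain ⟨q, -, hq⟩ := (u1 t ht).1
        have := q.2.2
        rw [hq]
        simp only
        omega
      have : dotRank π (i + 1) j ≤ dotRank π (i + 1) (j + 1) := hmono le_rfl (Nat.le_succ j)
      omega
    have r1 := dotRank_succ_row π ⟨i, hin⟩ (j + 1)
    have r2 := dotRank_succ_col π (i + 1) ⟨j, hjn⟩
    have c1 := chainLen_succ_row F i (j + 1)
    have c2 := chainLen_succ_col F (i + 1) j
    simp only at r1 r2
    refine ⟨⟨i, hin⟩, ⟨j, hjn⟩, rfl, rfl, ?_, ?_⟩
    · rw [Fin.lt_def]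
      simp only
      split_ifs at r2 <;> omega
    · rw [Fin.lt_def]
      simp only
      split_ifs at r1 <;> omega
  obtain ⟨a, b, rfl, rfl, hab⟩ := hrothe
  have hne : ((Rothe w).filter fun p => rankMat w p.1 p.2 < chainLen F (p.1 + 1) (p.2 + 1)).Nonempty :=
    ⟨((a : ℕ), (b : ℕ)), Finset.mem_filter.2 ⟨(mem_rothe_iff w a b).2 hab, by
      rw [rankMat_eq]; exact hv⟩⟩
  obtain ⟨p, hp, hmax⟩ := Finset.exists_max_image _ (fun p => p.1 + p.2) hne
  rw [Finset.mem_filter] at hp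
  refine ⟨p, Finset.mem_filter.2 ⟨hp.1, fun h => ?_, fun h => ?_⟩, hp.2⟩
  · have hlt : p.1 + 1 < n ∧ p.2 < n := by
      have := (Finset.mem_filter.1 h).1
      simpa using this
    have hs := (mem_rothe_iff w ⟨p.1 + 1, hlt.1⟩ ⟨p.2, hlt.2⟩).1 h
    have r := dotRank_succ_row π ⟨p.1 + 1, hlt.1⟩ (p.2 + 1)
    have hs2 : p.2 < (π.symm ⟨p.1 + 1, hlt.1⟩ : ℕ) := hs.2
    rw [if_neg (by omega)] at r
    have hv' := hp.2
    rw [rankMat_eq, ← hπ] at hv'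
    have := hmax (p.1 + 1, p.2) (Finset.mem_filter.2 ⟨h, by
      rw [rankMat_eq, ← hπ]
      have : chainLen F (p.1 + 1) (p.2 + 1) ≤ chainLen F (p.1 + 1 + 1) (p.2 + 1) :=
        chainLen_mono (Nat.le_succ _) le_rfl
      simp only at r ⊢
      omega⟩)
    simp only at this
    omega
  · have hlt : p.1 < n ∧ p.2 + 1 < n := by
      have := (Finset.mem_filter.1 h).1
      simpa using this
    have hs := (mem_rothe_iff w ⟨p.1, hlt.1⟩ ⟨p.2 + 1, hlt.2⟩).1 h
    have r := dotRank_succ_col π (p.1 + 1) ⟨p.2 + 1, hlt.2⟩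
    have hs2 : p.1 < (π ⟨p.2 + 1, hlt.2⟩ : ℕ) := hs.1
    rw [if_neg (by omega)] at r
    have hv' := hp.2
    rw [rankMat_eq, ← hπ] at hv'
    have := hmax (p.1, p.2 + 1) (Finset.mem_filter.2 ⟨h, by
      rw [rankMat_eq, ← hπ]
      have : chainLen F (p.1 + 1) (p.2 + 1) ≤ chainLen F (p.1 + 1) (p.2 + 1 + 1) :=
        chainLen_mono le_rfl (Nat.le_succ _)
      simp only at r ⊢
      omega⟩)
    simp only at this
    omega

theorem schubIdeal_le_vanIdeal (w : Equiv.Perm (Fin n)) :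
    schubIdeal n k w ≤ vanIdeal k (flipPerm w) := by
  refine Ideal.span_le.2 ?_
  rintro d ⟨i, j, -, -, ri, ci, -, -, h3, h4, rfl⟩
  refine minor_mem_vanIdeal (i := i + 1) (j := j + 1) ?_ (fun a => Nat.lt_succ_of_le (h3 a))
    fun a => Nat.lt_succ_of_le (h4 a)
  rw [rankMat_eq]
  exact Nat.lt_succ_self _

end groebner

/-- Corollary 2.2, the Knutson–Miller Gröbner basis theorem: for any
diagonal term order — a monomial order for which the leading term of the determinant
of every square submatrix of the generic matrix (with strictly increasing rows counted
from the bottom and strictly increasing columns) is the northwest-to-southeast diagonal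
term — the essential minors form a Gröbner basis of the Schubert determinantal
ideal `I_w`. -/
theorem knutson_miller_groebner (n : ℕ) (k : Type) [Field k] (w : Equiv.Perm (Fin n))
    (mlt : (Fin n × Fin n →₀ ℕ) → (Fin n × Fin n →₀ ℕ) → Prop)
    (hord : IsStrictTotalOrder (Fin n × Fin n →₀ ℕ) mlt)
    (hadd : ∀ a b c : Fin n × Fin n →₀ ℕ, mlt a b → mlt (a + c) (b + c))
    (hzero : ∀ a : Fin n × Fin n →₀ ℕ, a ≠ 0 → mlt 0 a)
    (hdiag : ∀ (r : ℕ) (ri ci : Fin (r + 1) → Fin n), StrictMono ri → StrictMono ci →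
      IsMaxMon n k mlt ((genZ n k).submatrix ri ci).det
        (∑ a : Fin (r + 1), Finsupp.single (ri (Fin.rev a), ci a) 1)) :
    Ideal.span { L | ∃ d ∈ essSchubMinors n k w, d ≠ 0 ∧
        ∃ m, IsMaxMon n k mlt d m ∧ L = MvPolynomial.monomial m (d.coeff m) }
      = Ideal.span { L | ∃ f ∈ schubIdeal n k w, f ≠ 0 ∧
        ∃ m, IsMaxMon n k mlt f m ∧ L = MvPolynomial.monomial m (f.coeff m) } := by
  have D : IsDiagOrder n k mlt := ⟨hord, hadd, hzero, hdiag⟩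
  apply le_antisymm
  · refine Ideal.span_mono ?_
    rintro L ⟨d, ⟨p, hp, hd⟩, h0, hL⟩
    refine ⟨d, Ideal.subset_span ⟨p.1, p.2, ?_, ?_, hd⟩, h0, hL⟩
    all_goals
      have hp' := (Finset.mem_filter.1 (Finset.mem_filter.1 hp).1).1
      simp only [Finset.mem_product, Finset.mem_range] at hp'
    · exact hp'.1
    · exact hp'.2
  · refine Ideal.span_le.2 ?_
    rintro L ⟨f, hf, -, m, hm, rfl⟩
    have hns := D.not_std (D.stdIndep (flipPerm w)) (schubIdeal_le_vanIdeal w hf) hm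
    obtain ⟨p, hp, hlt⟩ := exists_essential hns
    obtain ⟨ri, ci, h1, h2, h3, h4, h5⟩ :=
      exists_minor_of_hasChain (hasChain_iff.2 (Nat.succ_le_of_lt hlt))
    set e := ∑ a, Finsupp.single (ri (Fin.rev a), ci a) 1 with he
    set d := ((genZ n k).submatrix ri ci).det with hd
    have hmax : IsMaxMon n k mlt d e := hdiag _ ri ci h1 h2
    have hc : coeff e d ≠ 0 := mem_support_iff.1 hmax.1
    have hL : monomial m (coeff m f) =
        monomial (m - e) (coeff m f * (coeff e d)⁻¹) * monomial e (coeff e d) := by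
      rw [monomial_mul, tsub_add_cancel_of_le h5, mul_assoc, inv_mul_cancel₀ hc, mul_one]
    rw [SetLike.mem_coe, hL]
    refine Ideal.mul_mem_left _ _ (Ideal.subset_span ⟨d, ⟨p, hp, ri, ci, h1, h2,
      fun a => Nat.le_of_lt_succ (h3 a), fun a => Nat.le_of_lt_succ (h4 a), hd⟩, ?_, e, hmax, rfl⟩)
    intro h
    rw [h, coeff_zero] at hc
    exact hc rfl

end
end

section
/- For all v, w ∈ S_n: (a) a subset F ⊆ D(v) is a face of the pipe complex Δ_{v,w} if and only if w_0 w ≤ ∏(D(v)∖F) in Bruhat order; (b) F is a facet (i.e. a maximal face) of Δ_{v,w} if and only if D(v)∖F ∈ RedPipes(v, w_0 w). Consequently Δ_{v,w} is pure: every face is contained in a face of cardinality #D(v) − ℓ(w_0 w), and #D(v) = ℓ(w_0 v). -/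
/-! The rank matrix of `u` counts large values among the first `k` entries of `u`.  Right
multiplication by `s_l` changes only the count at `k = l`, and there the longer of `u`, `u s_l`
has count `min (c_{l-1} + 1) c_{l+1}` while the shorter one has `max c_{l-1} (c_{l+1} - 1)`,
where `c_{l-1}`, `c_{l+1}` are the neighbouring counts, common to `u` and `u s_l`.  Both
expressions are monotone in the counts, so both operations "replace `u` by the longer
(shorter) of `u`, `u s_l`" preserve Bruhat order (`bruhatLE_up`, `bruhatLE_down`).

From this the subword property follows by induction on the word, removing its last letter: if
`x` is below the Demazure product of `Q l`, the shorter of `x`, `x s_l` is below that of `Q`,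
hence is spelled by a reduced subword of `Q`, to which `l` is appended when necessary
(`exists_sublist_of_bruhatLE`); conversely Demazure products of subwords are smaller
(`foldl_mono_sublist`).  Since boxes are read in a fixed order without repetition, subwords of the
reading word of `Q` are the reading words of subsets of `Q`.  The statements on facets and purity
then only use that reduced pipe dreams for `x` all have cardinality `ℓ(x)`.  Finally, sending a
pair `p < q` with `v p < v q` to the box `(n - v(q) - 1, p)` (0-based) is a bijection from the
inversions of `w₀ v` to `D(v)`. -/

open Equiv MvPolynomial

noncomputable section
open scoped Classical

variable {n : ℕ}

/-! ### Length and adjacent transpositions -/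

theorem adjSwap_mul_self (l : ℕ) : (adjSwap l : Equiv.Perm (Fin n)) * adjSwap l = 1 := by
  unfold adjSwap
  split_ifs <;> simp

theorem adjSwap_eq {l : ℕ} {a b : Fin n} (ha : (a : ℕ) + 1 = l) (hb : (b : ℕ) = l) :
    (adjSwap l : Equiv.Perm (Fin n)) = Equiv.swap a b := by
  have h : 1 ≤ l ∧ l < n := ⟨by omega, by omega⟩
  unfold adjSwap
  rw [dif_pos h]
  congr 1 <;> apply Fin.ext <;> simp <;> omega

/-- The inversions of `u s`, other than the pair `(a, b)` of swapped positions, are the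
inversions of `u` transported by `s`. -/
theorem invCount_mul_swap (u : Equiv.Perm (Fin n)) {a b : Fin n} (hab : (b : ℕ) = a + 1)
    (h : u a < u b) : invCount (u * Equiv.swap a b) = invCount u + 1 := by
  have hlt : a < b := by rw [Fin.lt_def]; omega
  -- `s` preserves the order of all pairs of positions other than `{a, b}`
  have key : ∀ p q : Fin n, p < q → ¬ (p = a ∧ q = b) →
      Equiv.swap a b p < Equiv.swap a b q := by
    intro p q hpq hne
    simp only [Equiv.swap_apply_def]
    simp only [Fin.ext_iff, Fin.lt_def] at *
    split_ifs <;> omega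
  unfold invCount
  rw [← Finset.card_erase_add_one (a := (a, b)) (Finset.mem_filter.2
    ⟨Finset.mem_univ _, hlt, by simpa using h⟩)]
  congr 1
  refine Finset.card_bij (fun p _ => (Equiv.swap a b p.1, Equiv.swap a b p.2)) ?_ ?_ ?_
  · rintro ⟨p, q⟩ hp
    simp only [Finset.mem_erase, Finset.mem_filter, Finset.mem_univ, true_and, ne_eq,
      Prod.mk.injEq] at hp ⊢
    exact ⟨key p q hp.2.1 hp.1, hp.2.2⟩
  · rintro ⟨p, q⟩ _ ⟨p', q'⟩ _ he
    simpa using he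
  · rintro ⟨p, q⟩ hp
    simp only [Finset.mem_filter, Finset.mem_univ, true_and] at hp
    have hne : ¬ (p = a ∧ q = b) := by
      rintro ⟨rfl, rfl⟩
      exact absurd h (not_lt.2 hp.2.le)
    refine ⟨(Equiv.swap a b p, Equiv.swap a b q), ?_, by simp⟩
    simp only [Finset.mem_erase, Finset.mem_filter, Finset.mem_univ, true_and, ne_eq,
      Prod.mk.injEq]
    refine ⟨?_, key p q hp.1 hne, by simpa using hp.2⟩
    rintro ⟨h1, h2⟩
    have hp' : p = b := by
      rw [← Equiv.swap_apply_self a b p, h1, Equiv.swap_apply_left]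
    have hq' : q = a := by
      rw [← Equiv.swap_apply_self a b q, h2, Equiv.swap_apply_right]
    subst hp' hq'
    exact absurd hp.1 (not_lt.2 hlt.le)

theorem invCount_mul_swap' (u : Equiv.Perm (Fin n)) {a b : Fin n} (hab : (b : ℕ) = a + 1)
    (h : u b < u a) : invCount u = invCount (u * Equiv.swap a b) + 1 := by
  have := invCount_mul_swap (u * Equiv.swap a b) hab (by simpa using h)
  simpa [mul_assoc] using this

theorem invCount_one : invCount (1 : Equiv.Perm (Fin n)) = 0 := by
  unfold invCount
  rw [Finset.card_eq_zero, Finset.filter_eq_empty_iff]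
  rintro ⟨p, q⟩ _ ⟨h1, h2⟩
  exact absurd h1 (not_lt.2 h2.le)

/-! ### Rank counts and Bruhat order -/

/-- The number of `t < k` (0-based) with `u t ≥ n - 1 - i`: the rank matrix with its column index
shifted by one, so that the empty range of columns is included. -/
def cnt (u : Equiv.Perm (Fin n)) (i k : ℕ) : ℕ :=
  ((Finset.univ : Finset (Fin n)).filter (fun t : Fin n => (t : ℕ) < k ∧ n ≤ (u t : ℕ) + i + 1)).card

theorem rankMat_eq_cnt (u : Equiv.Perm (Fin n)) (i j : ℕ) : rankMat u i j = cnt u i (j + 1) := by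
  unfold rankMat cnt
  symm
  refine Finset.card_bij (fun t _ => (t : ℕ)) ?_ ?_ ?_
  · intro t ht
    simp only [Finset.mem_filter, Finset.mem_univ, true_and, Finset.mem_range] at ht ⊢
    refine ⟨t.2, by omega, ?_⟩
    simpa [permVal] using ht.2
  · intro t _ t' _ h
    exact Fin.ext h
  · intro t ht
    simp only [Finset.mem_filter, Finset.mem_range] at ht
    refine ⟨⟨t, ht.1⟩, ?_, rfl⟩
    have h2 := ht.2.2
    rw [permVal, dif_pos ht.1] at h2
    simp only [Finset.mem_filter, Finset.mem_univ, true_and]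
    exact ⟨by omega, h2⟩

theorem cnt_zero (u : Equiv.Perm (Fin n)) (i : ℕ) : cnt u i 0 = 0 := by
  simp [cnt]

theorem cnt_succ (u : Equiv.Perm (Fin n)) (i : ℕ) (t : Fin n) :
    cnt u i (t + 1) = cnt u i t + if n ≤ (u t : ℕ) + i + 1 then 1 else 0 := by
  unfold cnt
  split_ifs with h
  · rw [← Finset.card_insert_of_notMem (a := t) (by simp)]
    congr 1
    ext s
    simp only [Finset.mem_filter, Finset.mem_univ, true_and, Finset.mem_insert, Fin.ext_iff]
    constructor
    · rintro ⟨h1, h2⟩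
      by_cases hs : (s : ℕ) = t
      · exact Or.inl hs
      · exact Or.inr ⟨by omega, h2⟩
    · rintro (hs | ⟨h1, h2⟩)
      · have : s = t := Fin.ext hs
        subst this
        exact ⟨by omega, h⟩
      · exact ⟨by omega, h2⟩
  · rw [add_zero]
    congr 1
    ext s
    simp only [Finset.mem_filter, Finset.mem_univ, true_and]
    constructor
    · rintro ⟨h1, h2⟩
      refine ⟨?_, h2⟩
      by_contra hs
      have : s = t := Fin.ext (by omega)
      subst this
      exact h h2
    · rintro ⟨h1, h2⟩
      exact ⟨by omega, h2⟩

theorem bruhatLE_iff (u w : Equiv.Perm (Fin n)) :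
    bruhatLE u w ↔ ∀ i k, cnt u i k ≤ cnt w i k := by
  unfold bruhatLE
  simp only [rankMat_eq_cnt]
  refine ⟨fun h i k => ?_, fun h i j => h i (j + 1)⟩
  cases k with
  | zero => simp [cnt_zero]
  | succ k => exact h i k

theorem bruhatLE_trans {u v w : Equiv.Perm (Fin n)} (h1 : bruhatLE u v) (h2 : bruhatLE v w) :
    bruhatLE u w := fun i j => (h1 i j).trans (h2 i j)

theorem bruhatLE_refl (u : Equiv.Perm (Fin n)) : bruhatLE u u := fun _ _ => le_rfl

/-- The identity is the only element of Bruhat order below the identity: the vanishing of its rank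
matrix at `i + j = n - 2` (0-based) forces `x j ≤ j` for all `j`. -/
theorem eq_one_of_bruhatLE_one {x : Equiv.Perm (Fin n)} (h : bruhatLE x 1) : x = 1 := by
  rw [bruhatLE_iff] at h
  have hle : ∀ t : Fin n, (x t : ℕ) ≤ t := by
    intro t
    by_contra hc
    have hx := (x t).2
    have h0 : cnt (1 : Equiv.Perm (Fin n)) (n - 2 - t) (t + 1) = 0 := by
      unfold cnt
      rw [Finset.card_eq_zero, Finset.filter_eq_empty_iff]
      rintro s _ ⟨h1, h2⟩
      simp only [Equiv.Perm.coe_one, id_eq] at h2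
      omega
    have h1 := h (n - 2 - t) (t + 1)
    rw [h0, cnt_succ, if_pos (by omega)] at h1
    omega
  have hsum : ∑ t : Fin n, (x t : ℕ) = ∑ t : Fin n, (t : ℕ) :=
    Equiv.sum_comp x (fun t : Fin n => (t : ℕ))
  rw [Finset.sum_eq_sum_iff_of_le (fun t _ => hle t)] at hsum
  ext t
  exact hsum t (Finset.mem_univ t)

theorem cnt_mul_swap_of_ne (u : Equiv.Perm (Fin n)) {a b : Fin n} (hab : (b : ℕ) = a + 1)
    (i k : ℕ) (hk : k ≠ b) : cnt (u * Equiv.swap a b) i k = cnt u i k := by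
  have key : ∀ t : Fin n, (t : ℕ) < k → (Equiv.swap a b t : ℕ) < k := by
    intro t ht
    rw [Equiv.swap_apply_def]
    simp only [Fin.ext_iff]
    split_ifs <;> omega
  unfold cnt
  refine Finset.card_bij (fun t _ => Equiv.swap a b t) ?_ ?_ ?_
  · intro t ht
    simp only [Finset.mem_filter, Finset.mem_univ, true_and] at ht ⊢
    exact ⟨key t ht.1, ht.2⟩
  · intro t _ t' _ h
    exact (Equiv.swap a b).injective h
  · intro t ht
    simp only [Finset.mem_filter, Finset.mem_univ, true_and] at ht
    refine ⟨Equiv.swap a b t, ?_, by simp⟩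
    simp only [Finset.mem_filter, Finset.mem_univ, true_and]
    exact ⟨key t ht.1, by simpa using ht.2⟩

/-! ### The lifting property -/

/-- The longer of `u` and `u s_l`: one step of the Demazure product. -/
def up (l : ℕ) (u : Equiv.Perm (Fin n)) : Equiv.Perm (Fin n) :=
  if invCount u < invCount (u * adjSwap l) then u * adjSwap l else u

/-- The shorter of `u` and `u s_l`. -/
def down (l : ℕ) (u : Equiv.Perm (Fin n)) : Equiv.Perm (Fin n) :=
  if invCount (u * adjSwap l) < invCount u then u * adjSwap l else u

theorem adjSwap_of_not {l : ℕ} (h : ¬ (1 ≤ l ∧ l < n)) :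
    (adjSwap l : Equiv.Perm (Fin n)) = 1 := by
  unfold adjSwap
  rw [dif_neg h]

theorem up_of_not {l : ℕ} (h : ¬ (1 ≤ l ∧ l < n)) (u : Equiv.Perm (Fin n)) : up l u = u := by
  simp [up, adjSwap_of_not h]

theorem down_of_not {l : ℕ} (h : ¬ (1 ≤ l ∧ l < n)) (u : Equiv.Perm (Fin n)) :
    down l u = u := by
  simp [down, adjSwap_of_not h]

theorem cnt_up_down {l : ℕ} (h : 1 ≤ l ∧ l < n) (u : Equiv.Perm (Fin n)) (i : ℕ) :
    (∀ k, k ≠ l → cnt (up l u) i k = cnt u i k) ∧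
    (∀ k, k ≠ l → cnt (down l u) i k = cnt u i k) ∧
    cnt (up l u) i l = min (cnt u i (l - 1) + 1) (cnt u i (l + 1)) ∧
    cnt (down l u) i l = max (cnt u i (l - 1)) (cnt u i (l + 1) - 1) := by
  obtain ⟨a, ha⟩ : ∃ a : Fin n, (a : ℕ) = l - 1 := ⟨⟨l - 1, by omega⟩, rfl⟩
  obtain ⟨b, hb⟩ : ∃ b : Fin n, (b : ℕ) = l := ⟨⟨l, h.2⟩, rfl⟩
  have hab : (b : ℕ) = a + 1 := by omega
  have hs : (adjSwap l : Equiv.Perm (Fin n)) = Equiv.swap a b := adjSwap_eq (by omega) hb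
  have hne : u a ≠ u b := fun he => by
    have := congrArg Fin.val (u.injective he)
    omega
  have hne' : ∀ k, k ≠ l → cnt (u * Equiv.swap a b) i k = cnt u i k := fun k hk =>
    cnt_mul_swap_of_ne u hab i k (by omega)
  have e1 := cnt_succ u i a
  have e2 := cnt_succ u i b
  have e3 := cnt_succ (u * Equiv.swap a b) i a
  rw [hne' a (by omega)] at e3
  simp only [Equiv.Perm.mul_apply, Equiv.swap_apply_left] at e3
  rw [ha, Nat.sub_add_cancel h.1] at e1 e3
  rw [hb] at e2
  rcases lt_or_gt_of_ne hne with hlt | hlt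
  · have hinv := invCount_mul_swap u hab hlt
    have hu : up l u = u * Equiv.swap a b := by rw [up, hs, if_pos (by omega)]
    have hd : down l u = u := by rw [down, hs, if_neg (by omega)]
    rw [hu, hd]
    refine ⟨hne', fun _ _ => rfl, ?_, ?_⟩ <;>
    · rw [Fin.lt_def] at hlt
      split_ifs at e1 e2 e3 <;> omega
  · have hinv := invCount_mul_swap' u hab hlt
    have hu : up l u = u := by rw [up, hs, if_neg (by omega)]
    have hd : down l u = u * Equiv.swap a b := by rw [down, hs, if_pos (by omega)]
    rw [hu, hd]
    refine ⟨fun _ _ => rfl, hne', ?_, ?_⟩ <;>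
    · rw [Fin.lt_def] at hlt
      split_ifs at e1 e2 e3 <;> omega

theorem bruhatLE_up (l : ℕ) {x u : Equiv.Perm (Fin n)} (h : bruhatLE x u) :
    bruhatLE (up l x) (up l u) := by
  by_cases hl : 1 ≤ l ∧ l < n
  · rw [bruhatLE_iff] at h ⊢
    intro i k
    obtain ⟨x1, -, x3, -⟩ := cnt_up_down hl x i
    obtain ⟨u1, -, u3, -⟩ := cnt_up_down hl u i
    by_cases hk : k = l
    · subst hk
      have h1 := h i (k - 1)
      have h2 := h i (k + 1)
      omega
    · rw [x1 k hk, u1 k hk]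
      exact h i k
  · rwa [up_of_not hl, up_of_not hl]

theorem bruhatLE_down (l : ℕ) {x u : Equiv.Perm (Fin n)} (h : bruhatLE x u) :
    bruhatLE (down l x) (down l u) := by
  by_cases hl : 1 ≤ l ∧ l < n
  · rw [bruhatLE_iff] at h ⊢
    intro i k
    obtain ⟨-, x1, -, x3⟩ := cnt_up_down hl x i
    obtain ⟨-, u1, -, u3⟩ := cnt_up_down hl u i
    by_cases hk : k = l
    · subst hk
      have h1 := h i (k - 1)
      have h2 := h i (k + 1)
      omega
    · rw [x1 k hk, u1 k hk]
      exact h i k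
  · rwa [down_of_not hl, down_of_not hl]

theorem down_up (l : ℕ) (u : Equiv.Perm (Fin n)) : down l (up l u) = down l u := by
  have hss : u * adjSwap l * adjSwap l = u := by rw [mul_assoc, adjSwap_mul_self, mul_one]
  unfold up
  split_ifs with h
  · unfold down
    rw [hss, if_pos h, if_neg (by omega)]
  · rfl

theorem up_down (l : ℕ) (u : Equiv.Perm (Fin n)) : up l (down l u) = up l u := by
  have hss : u * adjSwap l * adjSwap l = u := by rw [mul_assoc, adjSwap_mul_self, mul_one]
  unfold down
  split_ifs with h
  · unfold up
    rw [hss, if_pos h, if_neg (by omega)]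
  · rfl

theorem bruhatLE_up_self (l : ℕ) (u : Equiv.Perm (Fin n)) : bruhatLE u (up l u) := by
  by_cases hl : 1 ≤ l ∧ l < n
  · rw [bruhatLE_iff]
    intro i k
    obtain ⟨u1, -, u3, -⟩ := cnt_up_down hl u i
    by_cases hk : k = l
    · subst hk
      have e1 := cnt_succ u i ⟨k - 1, by omega⟩
      have e2 := cnt_succ u i ⟨k, hl.2⟩
      simp only [Nat.sub_add_cancel hl.1] at e1 e2
      split_ifs at e1 e2 <;> omega
    · rw [u1 k hk]
  · rw [up_of_not hl]
    exact bruhatLE_refl u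

theorem bruhatLE_down_self (l : ℕ) (u : Equiv.Perm (Fin n)) : bruhatLE (down l u) u := by
  by_cases hl : 1 ≤ l ∧ l < n
  · rw [bruhatLE_iff]
    intro i k
    obtain ⟨-, u1, -, u3⟩ := cnt_up_down hl u i
    by_cases hk : k = l
    · subst hk
      have e1 := cnt_succ u i ⟨k - 1, by omega⟩
      have e2 := cnt_succ u i ⟨k, hl.2⟩
      simp only [Nat.sub_add_cancel hl.1] at e1 e2
      split_ifs at e1 e2 <;> omega
    · rw [u1 k hk]
  · rw [down_of_not hl]
    exact bruhatLE_refl u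

/-- If `u` has a descent at `l`, removing it lowers the length by exactly one. -/
theorem down_cases (l : ℕ) (u : Equiv.Perm (Fin n)) :
    down l u = u ∨ (up l (down l u) = u ∧ invCount u = invCount (down l u) + 1) := by
  by_cases hl : 1 ≤ l ∧ l < n
  · by_cases h : invCount (u * adjSwap l) < invCount u
    · right
      rw [up_down]
      refine ⟨by rw [up, if_neg (by omega)], ?_⟩
      rw [down, if_pos h]
      obtain ⟨a, ha⟩ : ∃ a : Fin n, (a : ℕ) = l - 1 := ⟨⟨l - 1, by omega⟩, rfl⟩
      obtain ⟨b, hb⟩ : ∃ b : Fin n, (b : ℕ) = l := ⟨⟨l, hl.2⟩, rfl⟩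
      have hab : (b : ℕ) = a + 1 := by omega
      have hs : (adjSwap l : Equiv.Perm (Fin n)) = Equiv.swap a b := adjSwap_eq (by omega) hb
      rw [hs] at h ⊢
      have hne : u a ≠ u b := fun he => by
        have := congrArg Fin.val (u.injective he)
        omega
      rcases lt_or_gt_of_ne hne with hlt | hlt
      · have := invCount_mul_swap u hab hlt
        omega
      · exact invCount_mul_swap' u hab hlt
    · left
      rw [down, if_neg h]
  · exact Or.inl (down_of_not hl u)

/-! ### The subword property -/

theorem demStep_eq_up (v u : Equiv.Perm (Fin n)) (b : ℕ × ℕ) :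
    demStep v u b = up (canonLabel v b) u := rfl

theorem foldl_mono_sublist (v : Equiv.Perm (Fin n)) {P Q : List (ℕ × ℕ)} (h : P.Sublist Q)
    {x u : Equiv.Perm (Fin n)} (hx : bruhatLE x u) :
    bruhatLE (P.foldl (demStep v) x) (Q.foldl (demStep v) u) := by
  induction h generalizing x u with
  | slnil => exact hx
  | cons b _ ih => exact ih (bruhatLE_trans hx (bruhatLE_up_self _ _))
  | cons_cons b _ ih => exact ih (bruhatLE_up _ hx)

theorem exists_sublist_of_bruhatLE (v : Equiv.Perm (Fin n)) (Q : List (ℕ × ℕ)) :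
    ∀ x : Equiv.Perm (Fin n), bruhatLE x (Q.foldl (demStep v) 1) →
      ∃ P : List (ℕ × ℕ), P.Sublist Q ∧ P.foldl (demStep v) 1 = x ∧ P.length = invCount x := by
  induction Q using List.reverseRecOn with
  | nil =>
    intro x hx
    have := eq_one_of_bruhatLE_one hx
    subst this
    exact ⟨[], List.Sublist.refl _, rfl, by simp [invCount_one]⟩
  | append_singleton Q b ih =>
    intro x hx
    rw [List.foldl_append, List.foldl_cons, List.foldl_nil, demStep_eq_up] at hx
    have hd := bruhatLE_down (canonLabel v b) hx
    rw [down_up] at hd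
    obtain ⟨P, hPQ, hPx, hPl⟩ := ih _ (bruhatLE_trans hd (bruhatLE_down_self _ _))
    rcases down_cases (canonLabel v b) x with h | ⟨h1, h2⟩
    · rw [h] at hPx hPl
      exact ⟨P, hPQ.trans (List.sublist_append_left _ _), hPx, hPl⟩
    · refine ⟨P ++ [b], hPQ.append (List.Sublist.refl _), ?_, ?_⟩
      · rw [List.foldl_append, hPx]
        exact h1
      · simp [hPl, h2]

/-! ### Subwords as subsets of boxes -/

theorem mem_readingList {P : Finset (ℕ × ℕ)} {b : ℕ × ℕ} :
    b ∈ readingList n P ↔ b.1 < n ∧ b.2 < n ∧ b ∈ P := by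
  obtain ⟨i, j⟩ := b
  simp only [readingList, List.mem_flatMap, List.mem_reverse, List.mem_range, List.mem_map,
    List.mem_filter, decide_eq_true_eq, Prod.mk.injEq]
  constructor
  · rintro ⟨i', hi', j', ⟨hj', hP⟩, rfl, rfl⟩
    exact ⟨hi', hj', hP⟩
  · rintro ⟨hi, hj, hP⟩
    exact ⟨i, hi, j, ⟨hj, hP⟩, rfl, rfl⟩

theorem nodup_readingList (P : Finset (ℕ × ℕ)) : (readingList n P).Nodup := by
  unfold readingList
  rw [List.nodup_flatMap]
  refine ⟨fun i _ => ?_, ?_⟩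
  · refine List.Nodup.map (fun j j' h => ?_) (List.nodup_range.filter _)
    simpa using h
  · refine (List.nodup_reverse.2 List.nodup_range).imp ?_
    intro i i' hne b h1 h2
    simp only [List.mem_map] at h1 h2
    obtain ⟨_, _, rfl⟩ := h1
    obtain ⟨_, _, h⟩ := h2
    exact hne (congrArg Prod.fst h).symm

theorem readingList_filter {P Q : Finset (ℕ × ℕ)} (h : P ⊆ Q) :
    readingList n P = (readingList n Q).filter (fun b => decide (b ∈ P)) := by
  unfold readingList
  rw [List.filter_flatMap]
  congr 1
  funext i
  rw [List.filter_map, List.filter_filter]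
  congr 1
  apply List.filter_congr
  intro j _
  by_cases hP : (i, j) ∈ P
  · simp [hP, h hP]
  · simp [hP]

theorem filter_mem_of_sublist {α : Type*} {l L : List α} (h : l.Sublist L) (hL : L.Nodup) :
    L.filter (fun b => decide (b ∈ l)) = l := by
  -- both lists are sublists of `L`, and the right one is a sublist of the left one
  have h1 : l.Sublist (L.filter (fun b => decide (b ∈ l))) := by
    have := h.filter (fun b => decide (b ∈ l))
    rwa [List.filter_eq_self.2 (by simp)] at this
  refine (h1.eq_of_length_le ?_).symm
  refine ((hL.filter _).subperm ?_).length_le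
  intro b hb
  simpa using (List.mem_filter.1 hb).2

theorem length_readingList {P : Finset (ℕ × ℕ)} (hP : ∀ b ∈ P, b.1 < n ∧ b.2 < n) :
    (readingList n P).length = P.card := by
  rw [← List.toFinset_card_of_nodup (nodup_readingList P)]
  congr 1
  ext b
  rw [List.mem_toFinset, mem_readingList]
  exact ⟨fun h => h.2.2, fun h => ⟨(hP b h).1, (hP b h).2, h⟩⟩

theorem lt_of_mem_Rothe {v : Equiv.Perm (Fin n)} {b : ℕ × ℕ} (hb : b ∈ Rothe v) :
    b.1 < n ∧ b.2 < n := by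
  simp only [Rothe, Finset.mem_filter, Finset.mem_product, Finset.mem_range] at hb
  exact hb.1

theorem mem_RedPipes {v x : Equiv.Perm (Fin n)} {P : Finset (ℕ × ℕ)} :
    P ∈ RedPipes v x ↔ P ⊆ Rothe v ∧ demazure v P = x ∧ P.card = invCount x := by
  simp only [RedPipes, Pipes, Finset.mem_filter, Finset.mem_powerset, and_assoc]

/-- The subword property for pipe dreams. -/
theorem exists_redPipe_iff (v x : Equiv.Perm (Fin n)) {Q : Finset (ℕ × ℕ)} (hQ : Q ⊆ Rothe v) :
    (∃ P ∈ RedPipes v x, P ⊆ Q) ↔ bruhatLE x (demazure v Q) := by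
  constructor
  · rintro ⟨P, hP, hPQ⟩
    obtain ⟨-, rfl, -⟩ := mem_RedPipes.1 hP
    refine foldl_mono_sublist v ?_ (bruhatLE_refl 1)
    rw [readingList_filter hPQ]
    exact List.filter_sublist
  · intro h
    obtain ⟨l, hl, hlx, hlen⟩ := exists_sublist_of_bruhatLE v _ x h
    have hsub : l.toFinset ⊆ Q := fun b hb =>
      (mem_readingList.1 (hl.subset (List.mem_toFinset.1 hb))).2.2
    have hread : readingList n l.toFinset = l := by
      rw [readingList_filter hsub]
      simp only [List.mem_toFinset]
      convert filter_mem_of_sublist hl (nodup_readingList Q)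
    refine ⟨l.toFinset, mem_RedPipes.2 ⟨hsub.trans hQ, ?_, ?_⟩, hsub⟩
    · rw [demazure, hread, hlx]
    · rw [← length_readingList (n := n) (fun b hb => lt_of_mem_Rothe (hQ (hsub hb))), hread, hlen]

/-! ### The size of the Rothe diagram -/

theorem card_Rothe (v : Equiv.Perm (Fin n)) :
    (Rothe v).card = invCount ((longest : Equiv.Perm (Fin n)) * v) := by
  have hlong : ∀ a b : Fin n, (longest : Equiv.Perm (Fin n)) a < longest b ↔ b < a :=
    fun a b => Fin.rev_lt_rev
  symm
  unfold invCount
  refine Finset.card_bij (fun p _ => (n - 1 - (v p.2 : ℕ), (p.1 : ℕ))) ?_ ?_ ?_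
  · rintro ⟨p, q⟩ h
    simp only [Finset.mem_filter, Finset.mem_univ, true_and, Equiv.Perm.mul_apply, hlong] at h
    have h1 := h.1
    have h2 := h.2
    have hq := (v q).2
    rw [Fin.lt_def] at h1 h2
    have e : n - 1 - (n - 1 - (v q : ℕ)) = v q := by omega
    simp only [Rothe, Finset.mem_filter, Finset.mem_product, Finset.mem_range, e]
    refine ⟨⟨by omega, p.2⟩, ?_, ?_⟩
    · simp only [permVal, p.2, dif_pos]
      change n - 1 - (v q : ℕ) + (v p : ℕ) + 1 < n
      omega
    · simpa [permVal] using h1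
  · rintro ⟨p, q⟩ _ ⟨p', q'⟩ _ he
    simp only [Prod.mk.injEq] at he ⊢
    have hq := (v q).2
    have hq' := (v q').2
    exact ⟨Fin.ext he.2, v.injective (Fin.ext (by omega))⟩
  · rintro ⟨i, j⟩ h
    simp only [Rothe, Finset.mem_filter, Finset.mem_product, Finset.mem_range] at h
    obtain ⟨⟨hi, hj⟩, h1, h2⟩ := h
    have hm : n - 1 - i < n := by omega
    rw [permVal, dif_pos hj] at h1
    rw [permVal, dif_pos hm] at h2
    refine ⟨(⟨j, hj⟩, v.symm ⟨n - 1 - i, hm⟩), ?_, ?_⟩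
    · simp only [Finset.mem_filter, Finset.mem_univ, true_and, Equiv.Perm.mul_apply, hlong,
        Equiv.apply_symm_apply, Fin.lt_def]
      exact ⟨h2, by omega⟩
    · simp only [Equiv.apply_symm_apply, Prod.mk.injEq, and_true]
      omega

/-- Proposition 3.2: faces of the pipe complex `Δ_{v,w}` are the
`F ⊆ D(v)` with `w₀w ≤ ∏(D(v)∖F)` in Bruhat order; facets are the complements of reduced
pipe dreams; the complex is pure of the expected dimension; and `#D(v) = ℓ(w₀v)`. -/
theorem pipe_complex_subword (n : ℕ) (v w : Equiv.Perm (Fin n)) :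
    (∀ F : Finset (ℕ × ℕ), F ⊆ Rothe v →
      (IsFace v w F ↔ bruhatLE (longest * w) (demazure v (Rothe v \ F)))) ∧
    (∀ F : Finset (ℕ × ℕ), F ⊆ Rothe v →
      ((IsFace v w F ∧ ∀ F' : Finset (ℕ × ℕ), IsFace v w F' → F ⊆ F' → F' = F)
        ↔ Rothe v \ F ∈ RedPipes v (longest * w))) ∧
    (∀ F : Finset (ℕ × ℕ), IsFace v w F →
      ∃ F' : Finset (ℕ × ℕ), IsFace v w F' ∧ F ⊆ F' ∧
        F'.card = (Rothe v).card - invCount ((longest : Equiv.Perm (Fin n)) * w)) ∧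
    (Rothe v).card = invCount ((longest : Equiv.Perm (Fin n)) * v) := by
  have hcompl : ∀ P ∈ RedPipes v (longest * w), IsFace v w (Rothe v \ P) := fun P hP => by
    refine ⟨Finset.sdiff_subset, P, hP, ?_⟩
    rw [Finset.sdiff_sdiff_eq_self (mem_RedPipes.1 hP).1]
  refine ⟨fun F hF => ?_, fun F hF => ⟨?_, fun h => ⟨?_, ?_⟩⟩, ?_, card_Rothe v⟩
  · rw [← exists_redPipe_iff v _ Finset.sdiff_subset, IsFace, and_iff_right hF]
  · rintro ⟨⟨-, P, hP, hPF⟩, hmax⟩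
    have hFP : F ⊆ Rothe v \ P := fun b hb =>
      Finset.mem_sdiff.2 ⟨hF hb, fun hbP => (Finset.mem_sdiff.1 (hPF hbP)).2 hb⟩
    rw [← hmax _ (hcompl P hP) hFP, Finset.sdiff_sdiff_eq_self (mem_RedPipes.1 hP).1]
    exact hP
  · exact ⟨hF, _, h, subset_rfl⟩
  · rintro F' ⟨hF', P, hP, hPF'⟩ hFF'
    have h1 : Rothe v \ F' ⊆ Rothe v \ F := Finset.sdiff_subset_sdiff subset_rfl hFF'
    -- both `P` and `D(v) \ F` have cardinality `ℓ(w₀w)`, so `P ⊆ D(v) \ F' ⊆ D(v) \ F` collapses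
    have h2 : P = Rothe v \ F := Finset.eq_of_subset_of_card_le (hPF'.trans h1) (by
      rw [(mem_RedPipes.1 h).2.2, (mem_RedPipes.1 hP).2.2])
    have h3 : Rothe v \ F' = Rothe v \ F := h1.antisymm (h2 ▸ hPF')
    rw [← Finset.sdiff_sdiff_eq_self hF', h3, Finset.sdiff_sdiff_eq_self hF]
  · rintro F ⟨hF, P, hP, hPF⟩
    refine ⟨Rothe v \ P, hcompl P hP, fun b hb =>
      Finset.mem_sdiff.2 ⟨hF hb, fun hbP => (Finset.mem_sdiff.1 (hPF hbP)).2 hb⟩, ?_⟩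
    rw [Finset.card_sdiff_of_subset (mem_RedPipes.1 hP).1, (mem_RedPipes.1 hP).2.2]
end
end
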